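/- arXiv:1906.09131 — 8 statements merged into one kernel-verified Lean document; each statement's English description precedes it below -/
import Mathlib

section
/- If 𝔄 is any structure interpreting Σ ∪ {t} in which t is transitive, then the pair C(𝔄) = (S, ≪), where S is the set of super-types realized in 𝔄 and π ≪ π' holds iff π and π' are realized in 𝔄 and 𝔄 ⊨ ∀x(π → ∀y(π'(y) → t(x,y))), is a certificate: ≪ is transitive and conditions (C1) and (C2) hold. -/
/- STATEMENT 1: The certificate of a structure is a certificate. -/

namespace FlutedCertificates

/-- A 1-type over the unary signature `Sig` (a maximal consistent conjunction of unary
literals, identified with a truth-value assignment to the unary predicates). -/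
abbrev OneType (Sig : Type) := Sig → Prop

/-- A structure interpreting the unary signature `Sig` together with the distinguished
binary predicate `t`. -/
structure Str (Sig : Type) (A : Type) where
  P : Sig → A → Prop
  T : A → A → Prop

/-- The 1-type of an element. -/
def Str.tp {Sig A : Type} (M : Str Sig A) (a : A) : OneType Sig :=
  fun p => M.P p a

/-- A super-type over `Sig`: a pair of a 1-type and a set of 1-types. -/
abbrev SuperType (Sig : Type) := OneType Sig × Set (OneType Sig)

/-- The super-type of an element: its 1-type together with the 1-types of the
elements to which it is `t`-related. -/
def Str.stp {Sig A : Type} (M : Str Sig A) (a : A) : SuperType Sig :=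
  (M.tp a, { π | ∃ b, M.T a b ∧ M.tp b = π })

/-- `tp(S)`: the 1-types occurring as first components of super-types in `S`. -/
def tps {Sig : Type} (S : Set (SuperType Sig)) : Set (OneType Sig) :=
  { π | ∃ Ps, (π, Ps) ∈ S }

/-- A certificate: a set `S` of super-types together with a transitive relation `≪` on
`tp(S)` satisfying conditions (C1) and (C2). -/
structure IsCertificate {Sig : Type} (S : Set (SuperType Sig))
    (ll : OneType Sig → OneType Sig → Prop) : Prop where
  trans : Transitive ll
  rel_on_tps : ∀ π π', ll π π' → π ∈ tps S ∧ π' ∈ tps S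
  C1 : ∀ π Ps, (π, Ps) ∈ S → ∀ π' ∈ Ps, ∃ Ps', (π', Ps') ∈ S ∧ Ps' ⊆ Ps
  C2 : ∀ π π' Ps Ps', ll π π' → (π, Ps) ∈ S → (π', Ps') ∈ S → insert π' Ps' ⊆ Ps

/-- The set of super-types realized in `𝔄`. -/
def certS {Sig A : Type} (M : Str Sig A) : Set (SuperType Sig) :=
  Set.range M.stp

/-- The relation `≪` of the certificate of `𝔄`: `π ≪ π'` iff `π` and `π'` are realized
in `𝔄` and `𝔄 ⊨ ∀x(π → ∀y(π'(y) → t(x,y)))`. -/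
def certLL {Sig A : Type} (M : Str Sig A) (π π' : OneType Sig) : Prop :=
  (∃ a, M.tp a = π) ∧ (∃ b, M.tp b = π') ∧
    ∀ a b, M.tp a = π → M.tp b = π' → M.T a b

/-- Lemma 2.  If `𝔄` is any structure interpreting `Σ ∪ {t}` in which
`t` is transitive, then `C(𝔄) = (S, ≪)` is a certificate. -/
theorem certificate_of_structure {Sig A : Type} (M : Str Sig A)
    (htrans : Transitive M.T) :
    IsCertificate (certS M) (certLL M) := by
  refine ⟨?_, ?_, ?_, ?_⟩
  · rintro π π' π'' ⟨ha, ⟨b, hb⟩, h1⟩ ⟨_, hc, h2⟩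
    exact ⟨ha, hc, fun x y hx hy => htrans (h1 x b hx hb) (h2 b y hb hy)⟩
  · rintro π π' ⟨⟨a, rfl⟩, ⟨b, rfl⟩, _⟩
    exact ⟨⟨_, a, rfl⟩, ⟨_, b, rfl⟩⟩
  · rintro π Ps ⟨a, ha⟩ π' hπ'
    obtain ⟨rfl, rfl⟩ := Prod.mk.inj ha
    obtain ⟨b, hab, rfl⟩ := hπ'
    refine ⟨_, ⟨b, rfl⟩, ?_⟩
    rintro _ ⟨c, hbc, rfl⟩
    exact ⟨c, htrans hab hbc, rfl⟩
  · rintro π π' Ps Ps' ⟨_, _, h⟩ ⟨a, ha⟩ ⟨b, hb⟩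
    obtain ⟨rfl, rfl⟩ := Prod.mk.inj ha
    obtain ⟨rfl, rfl⟩ := Prod.mk.inj hb
    have hab := h a b rfl rfl
    rintro _ (rfl | ⟨c, hbc, rfl⟩)
    · exact ⟨b, hab, rfl⟩
    · exact ⟨c, htrans hab hbc, rfl⟩

end FlutedCertificates
end

section
/- Let 𝔄 be a structure interpreting Σ ∪ {t} with t transitive, and let ψ be a basic FL²1T^u-formula over Σ ∪ {t}. If 𝔄 ⊨ ψ, then C(𝔄) ⊨ ψ, where C(𝔄) is the certificate of 𝔄. -/
/- STATEMENT 2: If a structure satisfies a basic FL²1Tᵘ-formula, then so does its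
certificate. -/

namespace FlutedCertificates

/-- Quantifier-free formulas over the unary signature `Sig`, in a single variable. -/
inductive QF (Sig : Type) : Type
  | atom (p : Sig) : QF Sig
  | fls : QF Sig
  | not (φ : QF Sig) : QF Sig
  | and (φ ψ : QF Sig) : QF Sig
  | or (φ ψ : QF Sig) : QF Sig

def QF.eval {Sig : Type} (v : Sig → Prop) : QF Sig → Prop
  | .atom p => v p
  | .fls => False
  | .not φ => ¬ QF.eval v φ
  | .and φ ψ => QF.eval v φ ∧ QF.eval v ψ
  | .or φ ψ => QF.eval v φ ∨ QF.eval v ψ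

/-- Basic FL²1Tᵘ-formulas: `∃x.μ`, `∀x.μ`, `∀x(π → ∃y(μ(y) ∧ ±t(x,y)))` and
`∀x(π → ∀y(π'(y) → ±t(x,y)))`. -/
inductive Basic (Sig : Type) : Type
  | exQF (μ : QF Sig)
  | allQF (μ : QF Sig)
  | allExT (π : OneType Sig) (μ : QF Sig) (sign : Bool)
  | allAllT (π π' : OneType Sig) (sign : Bool)

/-- Satisfaction of a basic formula in a structure. -/
def StrSat {Sig A : Type} (M : Str Sig A) : Basic Sig → Prop
  | .exQF μ => ∃ a : A, μ.eval (M.tp a)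
  | .allQF μ => ∀ a : A, μ.eval (M.tp a)
  | .allExT π μ s => ∀ a : A, M.tp a = π →
      ∃ b : A, μ.eval (M.tp b) ∧ (if s then M.T a b else ¬ M.T a b)
  | .allAllT π π' s => ∀ a : A, M.tp a = π → ∀ b : A, M.tp b = π' →
      (if s then M.T a b else ¬ M.T a b)

/-- Satisfaction of a basic formula by a certificate `(S, ≪)` (conditions (i)–(vi)). -/
def CertSat {Sig : Type} (S : Set (SuperType Sig))
    (ll : OneType Sig → OneType Sig → Prop) : Basic Sig → Prop
  | .exQF μ => ∃ π ∈ tps S, μ.eval π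
  | .allQF μ => ∀ π ∈ tps S, μ.eval π
  | .allExT π μ true => ∀ Ps, (π, Ps) ∈ S → ∃ π' ∈ Ps, μ.eval π'
  | .allExT π μ false => ∀ Ps, (π, Ps) ∈ S →
      ∃ π' Ps', (π', Ps') ∈ S ∧ μ.eval π' ∧ ¬ ∃ α ∈ insert π Ps, ll α π'
  | .allAllT π π' true => π ∈ tps S → π' ∈ tps S → ll π π'
  | .allAllT π π' false => ∀ Ps, (π, Ps) ∈ S → π' ∉ Ps

/-- Lemma 3.  Let `𝔄` be a structure interpreting `Σ ∪ {t}` with `t`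
transitive, and `ψ` a basic FL²1Tᵘ-formula.  If `𝔄 ⊨ ψ` then `C(𝔄) ⊨ ψ`. -/
theorem certificate_satisfies {Sig A : Type} (M : Str Sig A)
    (htrans : Transitive M.T) (ψ : Basic Sig) (h : StrSat M ψ) :
    CertSat (certS M) (certLL M) ψ := by
  cases ψ with
  | exQF μ =>
    obtain ⟨a, ha⟩ := h
    exact ⟨M.tp a, ⟨_, a, rfl⟩, ha⟩
  | allQF μ =>
    rintro π ⟨Ps, a, ha⟩
    obtain ⟨rfl, rfl⟩ := Prod.mk.inj ha
    exact h a
  | allExT π μ s =>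
    cases s with
    | true =>
      rintro Ps ⟨a, ha⟩
      obtain ⟨rfl, rfl⟩ := Prod.mk.inj ha
      obtain ⟨b, hb, hab⟩ := h a rfl
      exact ⟨M.tp b, ⟨b, by simpa using hab, rfl⟩, hb⟩
    | false =>
      rintro Ps ⟨a, ha⟩
      obtain ⟨rfl, rfl⟩ := Prod.mk.inj ha
      obtain ⟨b, hb, hab⟩ := h a rfl
      have hab' : ¬ M.T a b := by simpa using hab
      refine ⟨M.tp b, _, ⟨b, rfl⟩, hb, ?_⟩
      rintro ⟨α, hα, -, -, hll⟩
      rcases hα with rfl | ⟨c, hac, rfl⟩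
      · exact hab' (hll a b rfl rfl)
      · exact hab' (htrans hac (hll c b rfl rfl))
  | allAllT π π' s =>
    cases s with
    | true =>
      rintro ⟨Ps, a, ha⟩ ⟨Ps', b, hb⟩
      obtain ⟨rfl, rfl⟩ := Prod.mk.inj ha
      obtain ⟨rfl, rfl⟩ := Prod.mk.inj hb
      refine ⟨⟨a, rfl⟩, ⟨b, rfl⟩, fun c d hc hd => ?_⟩
      simpa using h c hc d hd
    | false =>
      rintro Ps ⟨a, ha⟩ hmem
      obtain ⟨rfl, rfl⟩ := Prod.mk.inj ha
      obtain ⟨b, hab, hb⟩ := hmem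
      have hn : ¬ M.T a b := by simpa using h a rfl b hb
      exact hn hab

end FlutedCertificates
end

section
/- If C = (S, ≪) is a certificate, then there exists a structure 𝔄 interpreting Σ ∪ {t} with t transitive, over a domain of cardinality 2|S|, such that for every basic FL²1T^u-formula ψ over Σ ∪ {t}, C ⊨ ψ implies 𝔄 ⊨ ψ. -/
/- STATEMENT 3: From a certificate one can build a structure of cardinality 2·|S|
satisfying all basic formulas that the certificate satisfies. -/

namespace FlutedCertificates

/-- Lemma 4.  If `C = (S, ≪)` is a certificate, then there exists a
structure `𝔄` interpreting `Σ ∪ {t}` with `t` transitive, over a domain of cardinality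
`2·|S|`, such that every basic FL²1Tᵘ-formula satisfied by `C` is satisfied by `𝔄`. -/
theorem certificate_to_structure {Sig : Type} (S : Set (SuperType Sig))
    (ll : OneType Sig → OneType Sig → Prop) (hC : IsCertificate S ll) :
    ∃ (A : Type) (M : Str Sig A), Transitive M.T ∧
      Cardinal.mk A = 2 * Cardinal.mk S ∧
      ∀ ψ : Basic Sig, CertSat S ll ψ → StrSat M ψ := by
  have key : ∀ π Ps π' Ps', (π, Ps) ∈ S → (π', Ps') ∈ S →
      (∃ α ∈ insert π Ps, ll α π') → insert π' Ps' ⊆ Ps := by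
    rintro π Ps π' Ps' h h' ⟨α, hα, hl⟩
    rcases hα with rfl | hα
    · exact hC.C2 _ _ _ _ hl h h'
    · obtain ⟨Q, hQ, hQs⟩ := hC.C1 _ _ h α hα
      exact (hC.C2 _ _ _ _ hl hQ h').trans hQs
  let M : Str Sig (Bool × S) :=
    { P := fun p a => a.2.1.1 p
      T := fun a b => (b.1 = true ∧ insert b.2.1.1 b.2.1.2 ⊆ a.2.1.2) ∨
        ∃ α ∈ insert a.2.1.1 a.2.1.2, ll α b.2.1.1 }
  have hT : ∀ a b, M.T a b → insert b.2.1.1 b.2.1.2 ⊆ a.2.1.2 := by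
    rintro a b (h | h)
    · exact h.2
    · exact key _ _ _ _ a.2.2 b.2.2 h
  refine ⟨Bool × S, M, ?_, by simp, ?_⟩
  · intro a b c hab hbc
    have h1 := hT a b hab
    rcases hbc with h | ⟨α, hα, hl⟩
    · exact Or.inl ⟨h.1, h.2.trans ((Set.subset_insert _ _).trans h1)⟩
    · exact Or.inr ⟨α, Set.mem_insert_of_mem _ (h1 hα), hl⟩
  · intro ψ hψ
    match ψ, hψ with
    | .exQF μ, hψ =>
      obtain ⟨π, ⟨Ps, h⟩, hμ⟩ := hψ
      exact ⟨(true, ⟨(π, Ps), h⟩), hμ⟩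
    | .allQF μ, hψ => exact fun a => hψ _ ⟨a.2.1.2, a.2.2⟩
    | .allExT π μ true, hψ =>
      rintro ⟨i, ⟨⟨π, Ps⟩, h⟩⟩ rfl
      obtain ⟨π', h', hμ⟩ := hψ Ps h
      obtain ⟨Q, hQ, hQs⟩ := hC.C1 _ _ h π' h'
      refine ⟨(true, ⟨(π', Q), hQ⟩), hμ, ?_⟩
      exact Or.inl ⟨rfl, Set.insert_subset h' hQs⟩
    | .allExT π μ false, hψ =>
      rintro ⟨i, ⟨⟨π, Ps⟩, h⟩⟩ rfl
      obtain ⟨π', Q, hQ, hμ, hn⟩ := hψ Ps h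
      refine ⟨(false, ⟨(π', Q), hQ⟩), hμ, ?_⟩
      rintro (h | h)
      · exact Bool.noConfusion h.1
      · exact hn h
    | .allAllT π π' true, hψ =>
      rintro a rfl b rfl
      exact Or.inr ⟨_, Set.mem_insert _ _, hψ ⟨_, a.2.2⟩ ⟨_, b.2.2⟩⟩
    | .allAllT π π' false, hψ =>
      rintro a rfl b rfl
      exact fun h => hψ _ a.2.2 (hT a b h (Set.mem_insert _ _))

end FlutedCertificates
end

section
/- If φ is a satisfiable formula of FL²1T^u, then φ has a model of size at most doubly exponential in the size of φ; consequently, the satisfiability problem for FL²1T^u is in 2-NEXPTIME. -/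
/- STATEMENT 4: FL²1Tᵘ has the doubly exponential-sized model property.  (The
resulting 2-NEXPTIME upper bound for satisfiability is the standard algorithmic
consequence of this bound.)  FL²1Tᵘ is the two-variable fluted fragment
over a unary signature `Fin n` together with one distinguished transitive binary
predicate `t` (and no other binary predicates). -/

namespace FlutedOneTransUnary

/-- Quantifier-free formulas over the unary signature `Fin n`, in a single variable. -/
inductive QF (n : ℕ) : Type
  | atom (p : Fin n) : QF n
  | fls : QF n
  | not (φ : QF n) : QF n
  | and (φ ψ : QF n) : QF n
  | or (φ ψ : QF n) : QF n

def QF.eval {n : ℕ} (v : Fin n → Prop) : QF n → Prop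
  | .atom p => v p
  | .fls => False
  | .not φ => ¬ QF.eval v φ
  | .and φ ψ => QF.eval v φ ∧ QF.eval v ψ
  | .or φ ψ => QF.eval v φ ∨ QF.eval v ψ

def QF.size {n : ℕ} : QF n → ℕ
  | .atom _ => 1
  | .fls => 1
  | .not φ => QF.size φ + 1
  | .and φ ψ => QF.size φ + QF.size ψ + 1
  | .or φ ψ => QF.size φ + QF.size ψ + 1

/-- A 1-type over `Fin n`: a maximal consistent conjunction of unary literals,
identified with a truth-value assignment to the unary predicates. -/
abbrev OneType (n : ℕ) := Fin n → Bool

/-- A structure interpreting the unary predicates `Fin n` and the distinguished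
binary predicate `t`. -/
structure Str (n : ℕ) (A : Type) where
  P : Fin n → A → Prop
  T : A → A → Prop

/-- `a` realizes the 1-type `π`. -/
def Str.hasType {n : ℕ} {A : Type} (M : Str n A) (π : OneType n) (a : A) : Prop :=
  ∀ p, M.P p a ↔ π p = true

/-- Basic FL²1Tᵘ-formulas: `∃x.μ`, `∀x.μ`, `∀x(π → ∃y(μ(y) ∧ ±t(x,y)))` and
`∀x(π → ∀y(π'(y) → ±t(x,y)))`. -/
inductive Basic (n : ℕ) : Type
  | exQF (μ : QF n)
  | allQF (μ : QF n)
  | allExT (π : OneType n) (μ : QF n) (sign : Bool)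
  | allAllT (π π' : OneType n) (sign : Bool)

def Basic.Sat {n : ℕ} {A : Type} (M : Str n A) : Basic n → Prop
  | .exQF μ => ∃ a : A, μ.eval (fun p => M.P p a)
  | .allQF μ => ∀ a : A, μ.eval (fun p => M.P p a)
  | .allExT π μ s => ∀ a : A, M.hasType π a →
      ∃ b : A, μ.eval (fun p => M.P p b) ∧ (if s then M.T a b else ¬ M.T a b)
  | .allAllT π π' s => ∀ a : A, M.hasType π a → ∀ b : A, M.hasType π' b →
      (if s then M.T a b else ¬ M.T a b)

def Basic.size {n : ℕ} : Basic n → ℕ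
  | .exQF μ => μ.size + 1
  | .allQF μ => μ.size + 1
  | .allExT _ μ _ => n + μ.size + 2
  | .allAllT _ _ _ => 2 * n + 2

/-- Fluted two-variable formulas over the unary signature `Fin n` together with the
distinguished binary predicate `t`; the index `m` records that the free variables form
a suffix of `x₁, …, x_m` (atoms must end at the last variable `x_m`). -/
inductive FL (n : ℕ) : ℕ → Type
  | patom (p : Fin n) {m : ℕ} (h1 : 1 ≤ m) (h2 : m ≤ 2) : FL n m
  | tatom : FL n 2
  | fls {m : ℕ} (h : m ≤ 2) : FL n m
  | not {m : ℕ} (φ : FL n m) : FL n m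
  | and {m : ℕ} (φ ψ : FL n m) : FL n m
  | or {m : ℕ} (φ ψ : FL n m) : FL n m
  | ex {m : ℕ} (h : m ≤ 1) (φ : FL n (m + 1)) : FL n m
  | all {m : ℕ} (h : m ≤ 1) (φ : FL n (m + 1)) : FL n m

def FL.Sat {n : ℕ} {A : Type} (M : Str n A) : ∀ {m : ℕ}, FL n m → (Fin m → A) → Prop
  | m, .patom p h1 _, v => M.P p (v ⟨m - 1, by omega⟩)
  | _, .tatom, v => M.T (v 0) (v 1)
  | _, .fls _, _ => False
  | _, .not φ, v => ¬ FL.Sat M φ v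
  | _, .and φ ψ, v => FL.Sat M φ v ∧ FL.Sat M ψ v
  | _, .or φ ψ, v => FL.Sat M φ v ∨ FL.Sat M ψ v
  | _, .ex _ φ, v => ∃ a : A, FL.Sat M φ (Fin.snoc v a)
  | _, .all _ φ, v => ∀ a : A, FL.Sat M φ (Fin.snoc v a)

def FL.size {n : ℕ} : ∀ {m : ℕ}, FL n m → ℕ
  | _, .patom _ _ _ => 1
  | _, .tatom => 1
  | _, .fls _ => 1
  | _, .not φ => FL.size φ + 1
  | _, .and φ ψ => FL.size φ + FL.size ψ + 1
  | _, .or φ ψ => FL.size φ + FL.size ψ + 1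
  | _, .ex _ φ => FL.size φ + 1
  | _, .all _ φ => FL.size φ + 1

/-- Renaming of unary predicates along a signature inclusion. -/
def FL.lift {n n' : ℕ} (f : Fin n → Fin n') : ∀ {m : ℕ}, FL n m → FL n' m
  | _, .patom p h1 h2 => .patom (f p) h1 h2
  | _, .tatom => .tatom
  | _, .fls h => .fls h
  | _, .not φ => .not (FL.lift f φ)
  | _, .and φ ψ => .and (FL.lift f φ) (FL.lift f ψ)
  | _, .or φ ψ => .or (FL.lift f φ) (FL.lift f ψ)
  | _, .ex h φ => .ex h (FL.lift f φ)
  | _, .all h φ => .all h (FL.lift f φ)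

/-- Satisfaction of an FL²1Tᵘ-sentence. -/
def SatSent {n : ℕ} {A : Type} (M : Str n A) (φ : FL n 0) : Prop :=
  FL.Sat M φ (fun i => i.elim0)


section Helpers

variable {n : ℕ} {A A' : Type} {M : Str n A} {M' : Str n A'}

theorem sat2 : ∀ (φ : FL n 2) (v : Fin 2 → A) (v' : Fin 2 → A'),
    (∀ p, M.P p (v 1) ↔ M'.P p (v' 1)) → (M.T (v 0) (v 1) ↔ M'.T (v' 0) (v' 1)) →
    (FL.Sat M φ v ↔ FL.Sat M' φ v')
  | .patom p _ _, _, _, h, _ => by simpa [FL.Sat] using h p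
  | .tatom, _, _, _, h => by simpa [FL.Sat] using h
  | .fls _, _, _, _, _ => by simp [FL.Sat]
  | .not φ, v, v', h, h' => by simp only [FL.Sat, sat2 φ v v' h h']
  | .and φ ψ, v, v', h, h' => by simp only [FL.Sat, sat2 φ v v' h h', sat2 ψ v v' h h']
  | .or φ ψ, v, v', h, h' => by simp only [FL.Sat, sat2 φ v v' h h', sat2 ψ v v' h h']
  | .ex h _, _, _, _, _ => absurd h (by decide)
  | .all h _, _, _, _, _ => absurd h (by decide)

/-- The two pointed structures realize the same extended type. -/
def Sim (M : Str n A) (M' : Str n A') (a : A) (a' : A') : Prop :=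
  (∀ p, M.P p a ↔ M'.P p a') ∧
  (∀ b, ∃ b', (∀ p, M.P p b ↔ M'.P p b') ∧ (M.T a b ↔ M'.T a' b')) ∧
  (∀ b', ∃ b, (∀ p, M.P p b ↔ M'.P p b') ∧ (M.T a b ↔ M'.T a' b'))

theorem sat1 : ∀ (φ : FL n 1) (v : Fin 1 → A) (v' : Fin 1 → A'),
    Sim M M' (v 0) (v' 0) → (FL.Sat M φ v ↔ FL.Sat M' φ v')
  | .patom p _ _, _, _, h => by simpa [FL.Sat] using h.1 p
  | .fls _, _, _, _ => by simp [FL.Sat]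
  | .not φ, v, v', h => by simp only [FL.Sat, sat1 φ v v' h]
  | .and φ ψ, v, v', h => by simp only [FL.Sat, sat1 φ v v' h, sat1 ψ v v' h]
  | .or φ ψ, v, v', h => by simp only [FL.Sat, sat1 φ v v' h, sat1 ψ v v' h]
  | .ex _ φ, v, v', h => by
      have key : ∀ b b', (∀ p, M.P p b ↔ M'.P p b') → (M.T (v 0) b ↔ M'.T (v' 0) b') →
          (FL.Sat M φ (Fin.snoc v b) ↔ FL.Sat M' φ (Fin.snoc v' b')) :=
        fun b b' h1 h2 => sat2 φ _ _ h1 h2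
      simp only [FL.Sat]
      constructor
      · rintro ⟨b, hb⟩
        obtain ⟨b', h1, h2⟩ := h.2.1 b
        exact ⟨b', (key b b' h1 h2).1 hb⟩
      · rintro ⟨b', hb⟩
        obtain ⟨b, h1, h2⟩ := h.2.2 b'
        exact ⟨b, (key b b' h1 h2).2 hb⟩
  | .all _ φ, v, v', h => by
      have key : ∀ b b', (∀ p, M.P p b ↔ M'.P p b') → (M.T (v 0) b ↔ M'.T (v' 0) b') →
          (FL.Sat M φ (Fin.snoc v b) ↔ FL.Sat M' φ (Fin.snoc v' b')) :=
        fun b b' h1 h2 => sat2 φ _ _ h1 h2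
      simp only [FL.Sat]
      constructor
      · intro hb b'
        obtain ⟨b, h1, h2⟩ := h.2.2 b'
        exact (key b b' h1 h2).1 (hb b)
      · intro hb b
        obtain ⟨b', h1, h2⟩ := h.2.1 b
        exact (key b b' h1 h2).2 (hb b')

theorem sat0 (H1 : ∀ a, ∃ a', Sim M M' a a') (H2 : ∀ a', ∃ a, Sim M M' a a') :
    ∀ (φ : FL n 0) (v : Fin 0 → A) (v' : Fin 0 → A'), (FL.Sat M φ v ↔ FL.Sat M' φ v')
  | .patom p h _, _, _ => absurd h (by decide)
  | .fls _, _, _ => by simp [FL.Sat]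
  | .not φ, v, v' => by simp only [FL.Sat, sat0 H1 H2 φ v v']
  | .and φ ψ, v, v' => by simp only [FL.Sat, sat0 H1 H2 φ v v', sat0 H1 H2 ψ v v']
  | .or φ ψ, v, v' => by simp only [FL.Sat, sat0 H1 H2 φ v v', sat0 H1 H2 ψ v v']
  | .ex _ φ, v, v' => by
      have key : ∀ b b', Sim M M' b b' →
          (FL.Sat M φ (Fin.snoc v b) ↔ FL.Sat M' φ (Fin.snoc v' b')) :=
        fun b b' h => sat1 φ _ _ h
      simp only [FL.Sat]
      constructor
      · rintro ⟨b, hb⟩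
        obtain ⟨b', h⟩ := H1 b
        exact ⟨b', (key b b' h).1 hb⟩
      · rintro ⟨b', hb⟩
        obtain ⟨b, h⟩ := H2 b'
        exact ⟨b, (key b b' h).2 hb⟩
  | .all _ φ, v, v' => by
      have key : ∀ b b', Sim M M' b b' →
          (FL.Sat M φ (Fin.snoc v b) ↔ FL.Sat M' φ (Fin.snoc v' b')) :=
        fun b b' h => sat1 φ _ _ h
      simp only [FL.Sat]
      constructor
      · intro hb b'
        obtain ⟨b, h⟩ := H2 b'
        exact (key b b' h).1 (hb b)
      · intro hb b
        obtain ⟨b', h⟩ := H1 b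
        exact (key b b' h).2 (hb b')

/-- Codes of extended types: 1-type, types seen, types missed, types seeing. -/
abbrev Code (n : ℕ) :=
  OneType n × Set (OneType n) × Set (OneType n) × Set (OneType n)

open Classical in
/-- The 1-type of an element. -/
noncomputable def tp (M : Str n A) (a : A) : OneType n := fun p => decide (M.P p a)

/-- The extended type of an element. -/
noncomputable def code (M : Str n A) (a : A) : Code n :=
  (tp M a, {π | ∃ b, tp M b = π ∧ M.T a b}, {π | ∃ b, tp M b = π ∧ ¬ M.T a b},
    {π | ∃ b, tp M b = π ∧ M.T b a})

/-- The maximal edge relation on codes. -/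
def CT (c d : Code n) : Prop :=
  d.1 ∈ c.2.1 ∧ d.2.1 ⊆ c.2.1 ∧ c.2.2.1 ⊆ d.2.2.1 ∧ c.2.2.2 ⊆ d.2.2.2 ∧ c.1 ∈ d.2.2.2

theorem CT.trans {c d e : Code n} (h : CT c d) (h' : CT d e) : CT c e :=
  ⟨h.2.1 h'.1, h'.2.1.trans h.2.1, h.2.2.1.trans h'.2.2.1,
    h.2.2.2.1.trans h'.2.2.2.1, h'.2.2.2.1 h.2.2.2.2⟩

theorem CT.of_T (hM : Transitive M.T) {a b : A} (h : M.T a b) : CT (code M a) (code M b) := by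
  refine ⟨⟨b, rfl, h⟩, ?_, ?_, ?_, ⟨a, rfl, h⟩⟩
  · rintro _ ⟨c, rfl, hc⟩
    exact ⟨c, rfl, hM h hc⟩
  · rintro _ ⟨c, rfl, hc⟩
    exact ⟨c, rfl, fun h' => hc (hM h h')⟩
  · rintro _ ⟨c, rfl, hc⟩
    exact ⟨c, rfl, hM hc h⟩

/-- The domain of the small model. -/
abbrev Dom (M : Str n A) := {c : Code n // ∃ a, code M a = c} × Bool

/-- Forced edges, closed under continuation by `CT`. -/
def Forced (M : Str n A) (c d : Code n) : Prop :=
  ∃ b, tp M b ∉ c.2.2.1 ∧ (code M b = d ∨ CT (code M b) d)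

/-- The small model. -/
def small (M : Str n A) : Str n (Dom M) where
  P p x := x.1.1.1 p = true
  T x y := (x.2 = y.2 ∧ CT x.1.1 y.1.1) ∨ Forced M x.1.1 y.1.1

theorem full_T {a b : A} (h : tp M b ∉ (code M a).2.2.1) : M.T a b :=
  by_contra fun h' => h ⟨b, rfl, h'⟩

theorem Forced.ct (hM : Transitive M.T) {a : A} {d : Code n} (h : Forced M (code M a) d) :
    CT (code M a) d := by
  obtain ⟨b, hb, rfl | h⟩ := h
  · exact CT.of_T hM (full_T hb)
  · exact (CT.of_T hM (full_T hb)).trans h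

theorem small_ct (hM : Transitive M.T) {x y : Dom M} (h : (small M).T x y) :
    CT x.1.1 y.1.1 := by
  obtain ⟨⟨_, a, rfl⟩, i⟩ := x
  rcases h with h | h
  · exact h.2
  · exact h.ct hM

theorem small_trans (hM : Transitive M.T) : Transitive (small M).T := by
  intro x y z hxy hyz
  have c1 := small_ct hM hxy
  have c2 := small_ct hM hyz
  rcases hyz with hyz | ⟨b, hb, h⟩
  · rcases hxy with hxy | ⟨b, hb, h⟩
    · exact Or.inl ⟨hxy.1.trans hyz.1, c1.trans c2⟩
    · refine Or.inr ⟨b, hb, Or.inr ?_⟩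
      rcases h with h | h
      · exact h ▸ c2
      · exact h.trans c2
  · exact Or.inr ⟨b, fun h' => hb (c1.2.2.1 h'), h⟩

theorem tp_iff {a : A} {π : OneType n} (h : tp M a = π) (p : Fin n) :
    M.P p a ↔ π p = true := by
  subst h; simp [tp]

theorem sim_small (hM : Transitive M.T) (a : A) (i : Bool) :
    Sim M (small M) a (⟨code M a, a, rfl⟩, i) := by
  refine ⟨tp_iff rfl, fun b => ?_, ?_⟩
  · by_cases h : M.T a b
    · exact ⟨(⟨code M b, b, rfl⟩, i), tp_iff rfl, iff_of_true h (Or.inl ⟨rfl, CT.of_T hM h⟩)⟩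
    · refine ⟨(⟨code M b, b, rfl⟩, !i), tp_iff rfl, iff_of_false h ?_⟩
      rintro (h' | ⟨c, hc, h' | h'⟩)
      · simp at h'
      · refine hc ⟨b, ?_, h⟩
        exact (congrArg Prod.fst h').symm
      · obtain ⟨d, hd, hdb⟩ := h'.2.2.2.2
        have hd' : tp M d = tp M c := hd
        exact h (hM (full_T (by rw [hd']; exact hc)) hdb)
  · rintro ⟨⟨_, b, rfl⟩, j⟩
    by_cases h : (small M).T (⟨code M a, a, rfl⟩, i) (⟨code M b, b, rfl⟩, j)
    · obtain ⟨d, hd, had⟩ := (small_ct hM h).1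
      exact ⟨d, tp_iff hd, iff_of_true had h⟩
    · have : tp M b ∈ (code M a).2.2.1 := by
        by_contra hb
        exact h (Or.inr ⟨b, hb, Or.inl rfl⟩)
      obtain ⟨d, hd, had⟩ := this
      exact ⟨d, tp_iff hd, iff_of_false had h⟩

theorem small_card (M : Str n A) [Fintype (Dom M)] (k : ℕ) :
    Fintype.card (Dom M) ≤ 2 ^ 2 ^ (2 * (n + k + 1)) := by
  classical
  have h1 : Fintype.card (Dom M) ≤ Fintype.card (Code n × Bool) :=
    Fintype.card_le_of_injective (fun x => (x.1.1, x.2)) (by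
      rintro ⟨⟨a, _⟩, i⟩ ⟨⟨b, _⟩, j⟩ h
      simpa using h)
  refine h1.trans ?_
  have h2 : Fintype.card (Code n × Bool) = 2 ^ (n + 3 * 2 ^ n + 1) := by
    simp [Code, Fintype.card_prod, Fintype.card_set]
    ring
  rw [h2]
  apply Nat.pow_le_pow_right (by norm_num)
  have h3 : n + 1 ≤ 2 ^ n := Nat.lt_two_pow_self
  calc n + 3 * 2 ^ n + 1 ≤ 2 ^ (n + 2) := by rw [pow_add]; omega
    _ ≤ _ := Nat.pow_le_pow_right (by norm_num) (by omega)

end Helpers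

/-- Lemma 5.  If an FL²1Tᵘ-formula `φ` is satisfiable (in a structure
interpreting `t` as a transitive relation), then `φ` has a model of size at most doubly
exponential in the size of `φ` (the size of a formula over the signature `Fin n` being
measured by `n + FL.size φ`).  Hence the satisfiability problem for FL²1Tᵘ is in
2-NEXPTIME. -/
theorem flutedOneTransUnary_doubly_exponential_model_property :
    ∃ c : ℕ, ∀ (n : ℕ) (φ : FL n 0),
      (∃ (A : Type) (_ : Nonempty A) (M : Str n A), Transitive M.T ∧ SatSent M φ) →
      ∃ (A : Type) (_ : Nonempty A) (_ : Fintype A) (M : Str n A),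
        Transitive M.T ∧ SatSent M φ ∧
        Fintype.card A ≤ 2 ^ 2 ^ (c * (n + FL.size φ + 1)) := by
  refine ⟨2, fun n φ => ?_⟩
  rintro ⟨A, ⟨a⟩, M, hM, hφ⟩
  refine ⟨Dom M, ⟨(⟨code M a, a, rfl⟩, true)⟩, Fintype.ofFinite _, small M, small_trans hM,
    ?_, ?_⟩
  · refine (sat0 (fun a => ⟨_, sim_small hM a true⟩) ?_ φ _ _).1 hφ
    rintro ⟨⟨_, b, rfl⟩, j⟩
    exact ⟨b, sim_small hM b j⟩
  · exact @small_card _ _ M (Fintype.ofFinite _) _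

end FlutedOneTransUnary
end

section
/- Let 𝔄 be any structure over a purely relational signature and z > 0. There exists a structure 𝔅 over the same signature such that: (i) for every first-order formula φ without equality, 𝔄 ⊨ φ iff 𝔅 ⊨ φ; (ii) |B| = z·|A|; and (iii) whenever ψ(x₁,…,x_{m−1}) = ∃x_m.χ(x₁,…,x_m) is a first-order formula without equality and 𝔅 ⊨ ψ[b₁,…,b_{m−1}], there exist at least z distinct elements b of B such that 𝔅 ⊨ χ[b₁,…,b_{m−1},b]. -/
/- STATEMENT 6: The duplication lemma for first-order logic without equality over a
purely relational signature. -/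

namespace Duplication

open FirstOrder FirstOrder.Language

/-- A bounded first-order formula contains no equality atoms. -/
inductive NoEq {L : FirstOrder.Language} {α : Type*} :
    ∀ {k : ℕ}, L.BoundedFormula α k → Prop
  | falsum {k : ℕ} : NoEq (BoundedFormula.falsum : L.BoundedFormula α k)
  | rel {k l : ℕ} (R : L.Relations l) (ts : Fin l → L.Term (α ⊕ Fin k)) :
      NoEq (BoundedFormula.rel R ts)
  | imp {k : ℕ} {f g : L.BoundedFormula α k} : NoEq f → NoEq g → NoEq (f.imp g)
  | all {k : ℕ} {f : L.BoundedFormula α (k + 1)} : NoEq f → NoEq f.all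

/-- The blow-up structure on `Fin z × A`. -/
@[reducible] def blow (L : FirstOrder.Language) [L.IsRelational]
    (A : Type*) [L.Structure A] (z : ℕ) : L.Structure (Fin z × A) where
  funMap f _ := isEmptyElim f
  RelMap R v := Structure.RelMap R (fun i => (v i).2)

theorem realize_blow (L : FirstOrder.Language) [L.IsRelational]
    (A : Type*) [L.Structure A] (z : ℕ) (hz : 0 < z) {α : Type*} {k : ℕ}
    (φ : L.BoundedFormula α k) (h : NoEq φ) (v : α → Fin z × A) (xs : Fin k → Fin z × A) :
    @FirstOrder.Language.BoundedFormula.Realize L (Fin z × A) (blow L A z) α k φ v xs ↔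
      φ.Realize (fun i => (v i).2) (fun i => (xs i).2) := by
  let _ := blow L A z
  induction h with
  | falsum => exact Iff.rfl
  | rel R ts =>
    change Structure.RelMap R (fun i => ((ts i).realize (Sum.elim v _)).2) ↔
      Structure.RelMap R (fun i => (ts i).realize _)
    refine iff_of_eq (congrArg _ (funext fun i => ?_))
    cases ts i with
    | var x => cases x <;> rfl
    | func f _ => exact isEmptyElim f
  | imp _ _ ih1 ih2 =>
    rw [BoundedFormula.realize_imp, BoundedFormula.realize_imp]
    exact imp_congr (ih1 _) (ih2 _)
  | all _ ih =>
    rw [BoundedFormula.realize_all, BoundedFormula.realize_all]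
    have key : ∀ (n : ℕ) (xs : Fin n → Fin z × A) (b : Fin z × A),
        (fun i => ((Fin.snoc xs b : Fin (n+1) → Fin z × A) i).2)
          = (Fin.snoc (fun i => (xs i).2) b.2 : Fin (n+1) → A) := by
      intro n xs b
      funext i
      refine Fin.lastCases ?_ (fun j => ?_) i <;> simp
    constructor
    · intro H a
      have := (ih _).1 (H (⟨0, hz⟩, a))
      rwa [key] at this
    · intro H b
      refine (ih _).2 ?_
      rw [key]
      exact H b.2

/-- Lemma 8.  Let `𝔄` be any structure over a purely relational
signature and `z > 0`.  There exists a structure `𝔅` over the same signature such that: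
(i) `𝔄` and `𝔅` satisfy the same first-order sentences without equality;
(ii) `|B| = z·|A|`; and (iii) whenever `ψ = ∃x_m.χ` is a first-order formula without
equality (with free variables `x₁, …, x_{m-1}`) and `𝔅 ⊨ ψ[b₁,…,b_{m-1}]`, there are at
least `z` distinct elements `b` of `B` with `𝔅 ⊨ χ[b₁,…,b_{m-1},b]`. -/
theorem duplication (L : FirstOrder.Language) [L.IsRelational]
    (A : Type*) [L.Structure A] (z : ℕ) (hz : 0 < z) :
    ∃ (B : Type _) (SB : L.Structure B),
      (∀ φ : L.Sentence, NoEq φ →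
        (A ⊨ φ ↔ @FirstOrder.Language.Sentence.Realize L B SB φ)) ∧
      Cardinal.mk B = z * Cardinal.mk A ∧
      (∀ (m : ℕ) (χ : L.BoundedFormula Empty (m + 1)), NoEq χ →
        ∀ bs : Fin m → B,
          @FirstOrder.Language.BoundedFormula.Realize L B SB Empty m
            (BoundedFormula.ex χ) (fun x => x.elim) bs →
          ∃ s : Finset B, z ≤ s.card ∧ ∀ b ∈ s,
            @FirstOrder.Language.BoundedFormula.Realize L B SB Empty (m + 1)
              χ (fun x => x.elim) (Fin.snoc bs b)) := by
  let _ := blow L A z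
  refine ⟨Fin z × A, blow L A z, ?_, ?_, ?_⟩
  · intro φ hφ
    have h := realize_blow L A z hz φ hφ (fun x => x.elim) (fun x => x.elim0)
    refine Iff.trans (iff_of_eq ?_) (h.symm.trans (iff_of_eq ?_))
    · unfold Sentence.Realize Formula.Realize
      congr 1 <;> exact Subsingleton.elim _ _
    · unfold Sentence.Realize Formula.Realize
      congr 1 <;> exact Subsingleton.elim _ _
  · simp
  · intro m χ hχ bs h
    rw [BoundedFormula.realize_ex] at h
    obtain ⟨b, hb⟩ := h
    refine ⟨Finset.univ.map ⟨fun i : Fin z => (i, b.2), fun i j h => (Prod.ext_iff.1 h).1⟩,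
      by simp, ?_⟩
    intro c hc
    obtain ⟨i, -, rfl⟩ := Finset.mem_map.1 hc
    rw [realize_blow L A z hz χ hχ] at hb ⊢
    convert hb using 1
    funext j
    refine Fin.lastCases ?_ (fun j => ?_) j <;> simp <;> rfl

end Duplication
end

section
/- Let Γ be a set of fluted m-clauses over a signature Σ ∪ {t}, let Σ' be the result of removing all predicates of maximal arity m from Σ, and let τ⁻ be a fluted m-type over Σ' ∪ {t}. If τ⁻ is consistent with Γ° (the set of clauses in the fluted-resolution closure Γ* of Γ that contain no non-distinguished predicate of arity m), then there exists a fluted m-type τ over Σ ∪ {t} such that τ ⊇ τ⁻ and τ is consistent with Γ. -/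
/- STATEMENT 7: Completeness of fluted (ordered) resolution (Lemma 9). -/

namespace FlutedResolution

attribute [local instance] Classical.propDecidable

/-- A fluted `m`-atom over the signature `Σ ∪ {t}`, where `Σ` consists of the
predicates `Fin n` with (positive) arities `ar`: either `p(x_{m-k+1},…,x_m)` for
`p ∈ Σ` of arity `k ≤ m`, or `t(x_{m-1},x_m)`. -/
inductive FAtom (n : ℕ) (ar : Fin n → ℕ) (m : ℕ) : Type
  | pred (i : Fin n) (h1 : 1 ≤ ar i) (h2 : ar i ≤ m) : FAtom n ar m
  | tat (h : 2 ≤ m) : FAtom n ar m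

/-- An atom over `Σ' ∪ {t}`, where `Σ'` is the result of removing from `Σ` all
predicates of maximal arity `m`. -/
def FAtom.Small {n : ℕ} {ar : Fin n → ℕ} {m : ℕ} : FAtom n ar m → Prop
  | .pred i _ _ => ar i < m
  | .tat _ => True

/-- A fluted `m`-literal: a signed fluted `m`-atom. -/
abbrev Lit (n : ℕ) (ar : Fin n → ℕ) (m : ℕ) := Bool × FAtom n ar m

/-- A fluted `m`-clause: a disjunction of fluted `m`-literals (`⊥` is the empty
clause). -/
abbrev Clause (n : ℕ) (ar : Fin n → ℕ) (m : ℕ) := Finset (Lit n ar m)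

/-- The fluted-resolution closure `Γ*` of a set `Γ` of fluted `m`-clauses: resolution
is allowed only on atoms `p(x₁,…,x_m)` where `p` is a non-distinguished predicate of
maximal arity `m`. -/
inductive InClosure {n : ℕ} {ar : Fin n → ℕ} {m : ℕ} (Γ : Set (Clause n ar m)) :
    Clause n ar m → Prop
  | base {c : Clause n ar m} (h : c ∈ Γ) : InClosure Γ c
  | res {γ δ : Clause n ar m} {i : Fin n} {h1 : 1 ≤ ar i} (hmax : ar i = m)
      (hγ : InClosure Γ γ) (hδ : InClosure Γ δ)
      (hpos : (true, FAtom.pred i h1 hmax.le) ∈ γ)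
      (hneg : (false, FAtom.pred i h1 hmax.le) ∈ δ) :
      InClosure Γ
        (γ.erase (true, FAtom.pred i h1 hmax.le) ∪
          δ.erase (false, FAtom.pred i h1 hmax.le))

def Good {n m : ℕ} {ar : Fin n → ℕ} (Γ : Set (Clause n ar m))
    (τminus : {a : FAtom n ar m // a.Small} → Bool) (S : Finset (FAtom n ar m)) : Prop :=
  ∃ τ : FAtom n ar m → Bool,
    (∀ (a : FAtom n ar m) (h : a.Small), τ a = τminus ⟨a, h⟩) ∧
    ∀ c, InClosure Γ c → (∀ l ∈ c, FAtom.Small (Prod.snd l) ∨ Prod.snd l ∉ S) →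
      ∃ l ∈ c, τ (Prod.snd l) = Prod.fst l

theorem good_step {n m : ℕ} {ar : Fin n → ℕ} (Γ : Set (Clause n ar m))
    (τminus : {a : FAtom n ar m // a.Small} → Bool) (S : Finset (FAtom n ar m))
    (a : FAtom n ar m) (hg : Good Γ τminus (insert a S)) : Good Γ τminus S := by
  obtain ⟨σ, hσ, hsat⟩ := hg
  by_cases ha : a.Small
  · refine ⟨σ, hσ, fun c hc h => hsat c hc fun l hl => ?_⟩
    rcases h l hl with h | h
    · exact Or.inl h
    · by_cases e : l.2 = a
      · exact Or.inl (e ▸ ha)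
      · exact Or.inr (by simp [e, h])
  have key : ∀ b : Bool, ¬ Good Γ τminus S → ∃ c, InClosure Γ c ∧
      (∀ l ∈ c, FAtom.Small (Prod.snd l) ∨ Prod.snd l ∉ S) ∧ ((!b), a) ∈ c ∧
      ∀ l ∈ c, l ≠ ((!b), a) → l.2 ≠ a ∧ σ l.2 ≠ l.1 := by
    intro b hng
    by_contra hno
    apply hng
    refine ⟨Function.update σ a b, ?_, ?_⟩
    · intro x hx
      have : x ≠ a := fun e => ha (e ▸ hx)
      rw [Function.update_of_ne this, hσ x hx]
    · intro c hc h
      by_contra hun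
      have hun' : ∀ l ∈ c, Function.update σ a b l.2 ≠ l.1 :=
        fun l hl e => hun ⟨l, hl, e⟩
      have h2 : ∀ l ∈ c, l ≠ ((!b), a) → l.2 ≠ a ∧ σ l.2 ≠ l.1 := by
        intro l hl hne
        have h3 := hun' l hl
        by_cases e : l.2 = a
        · exfalso
          rw [e, Function.update_self] at h3
          apply hne
          obtain ⟨x, y⟩ := l
          simp only at e h3
          subst e
          cases x <;> cases b <;> simp_all
        · rw [Function.update_of_ne e] at h3
          exact ⟨e, h3⟩
      by_cases hm : ((!b), a) ∈ c
      · exact hno ⟨c, hc, h, hm, h2⟩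
      · have h4 : ∀ l ∈ c, l ≠ ((!b), a) := fun l hl e => hm (e ▸ hl)
        obtain ⟨l, hl, e⟩ := hsat c hc fun l hl => (h l hl).imp_right fun h5 => by
          simp [h5, (h2 l hl (h4 l hl)).1]
        exact (h2 l hl (h4 l hl)).2 e
  by_contra hng
  obtain ⟨δ, hδ, hδS, hδa, hδu⟩ := key true hng
  obtain ⟨γ, hγ, hγS, hγa, hγu⟩ := key false hng
  cases a with
  | tat h => exact ha trivial
  | pred i h1 h2 =>
    have hmax : ar i = m := le_antisymm h2 (not_lt.mp ha)
    have hall : ∀ l ∈ (γ.erase (true, FAtom.pred i h1 hmax.le) ∪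
          δ.erase (false, FAtom.pred i h1 hmax.le)),
        (FAtom.Small l.2 ∨ l.2 ∉ S) ∧ l.2 ≠ FAtom.pred i h1 h2 ∧ σ l.2 ≠ l.1 := by
      intro l hl
      rcases Finset.mem_union.mp hl with hl | hl
      · have := Finset.mem_erase.mp hl
        exact ⟨hγS l this.2, hγu l this.2 this.1⟩
      · have := Finset.mem_erase.mp hl
        exact ⟨hδS l this.2, hδu l this.2 this.1⟩
    obtain ⟨l, hl, e⟩ := hsat _ (InClosure.res hmax hγ hδ hγa hδa) fun l hl =>
      (hall l hl).1.imp_right fun h5 => by simp [h5, (hall l hl).2.1]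
    exact (hall l hl).2.2 e

theorem finite_atom (n m : ℕ) (ar : Fin n → ℕ) : Finite (FAtom n ar m) := by
  let f : FAtom n ar m → Option (Fin n) := fun a => match a with
    | .pred i _ _ => some i
    | .tat _ => none
  apply Finite.of_injective f
  intro a b h
  cases a <;> cases b <;> simp_all [f]

/-- Lemma 9.  Let `Γ` be a set of fluted `m`-clauses over `Σ ∪ {t}`
and let `τ⁻` be a fluted `m`-type over `Σ' ∪ {t}` (a truth-value assignment to the
atoms not involving non-distinguished predicates of maximal arity `m`).  If `τ⁻` is
consistent with `Γ°` (the clauses of the resolution closure `Γ*` containing no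
non-distinguished predicate of arity `m`), then there is a fluted `m`-type `τ` over
`Σ ∪ {t}` extending `τ⁻` and consistent with `Γ`. -/
theorem fluted_resolution_completeness {n m : ℕ} {ar : Fin n → ℕ}
    (Γ : Set (Clause n ar m))
    (τminus : {a : FAtom n ar m // a.Small} → Bool)
    (hcons : ∀ c : Clause n ar m, InClosure Γ c → (∀ l ∈ c, FAtom.Small (Prod.snd l)) →
      ∃ l ∈ c, ∃ h : FAtom.Small (Prod.snd l), τminus ⟨Prod.snd l, h⟩ = Prod.fst l) :
    ∃ τ : FAtom n ar m → Bool,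
      (∀ (a : FAtom n ar m) (h : a.Small), τ a = τminus ⟨a, h⟩) ∧
      ∀ c ∈ Γ, ∃ l ∈ c, τ (Prod.snd l) = Prod.fst l := by
  have hfin := finite_atom n m ar
  have := Fintype.ofFinite (FAtom n ar m)
  have hall : ∀ S : Finset (FAtom n ar m), Good Γ τminus S → Good Γ τminus ∅ := by
    intro S
    induction S using Finset.induction_on with
    | empty => exact id
    | insert a S _ ih => exact fun h => ih (good_step Γ τminus S a h)
  have h0 : Good Γ τminus Finset.univ := by
    refine ⟨fun a => if h : a.Small then τminus ⟨a, h⟩ else true, ?_, ?_⟩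
    · intro a h
      simp [h]
    · intro c hc h
      obtain ⟨l, hl, hs, e⟩ := hcons c hc fun l hl => by simpa using h l hl
      exact ⟨l, hl, by simp [hs, e]⟩
  obtain ⟨τ, h1, h2⟩ := hall _ h0
  exact ⟨τ, h1, fun c hc => h2 c (InClosure.base hc) (by simp)⟩

end FlutedResolution
end

section
/- Let φ be an FL²1T-formula (the two-variable fluted fragment with one distinguished transitive relation). If φ is satisfiable, then φ has a model of size at most triply exponential in the size of φ; hence the satisfiability problem for FL²1T is in 3-NEXPTIME. -/
/- STATEMENT 9: FL²1T has the triply exponential-sized model property (Lemma 12). -/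
namespace FlutedOneTrans

/-- A fluted `m`-atom over the signature of predicates `Fin n` with arities `ar`,
together with the distinguished binary predicate `t`: either `p(x_{m-k+1},…,x_m)` for a
predicate `p` of arity `k ≤ m`, or `t(x_{m-1},x_m)` (when `2 ≤ m`). -/
inductive FAtom (n : ℕ) (ar : Fin n → ℕ) (m : ℕ) : Type
  | pred (i : Fin n) (h : ar i ≤ m) : FAtom n ar m
  | tat (h : 2 ≤ m) : FAtom n ar m

/-- A structure interpreting the signature `(n, ar)` together with the distinguished
binary predicate `t`. -/
structure Str (n : ℕ) (ar : Fin n → ℕ) (A : Type) where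
  R : ∀ i : Fin n, (Fin (ar i) → A) → Prop
  T : A → A → Prop

def FAtom.Sat {n : ℕ} {ar : Fin n → ℕ} {A : Type} (M : Str n ar A) {m : ℕ} :
    FAtom n ar m → (Fin m → A) → Prop
  | .pred i h, v => M.R i (fun j => v ⟨m - ar i + j.val, by have := j.isLt; omega⟩)
  | .tat h, v => M.T (v ⟨m - 2, by omega⟩) (v ⟨m - 1, by omega⟩)

def FAtom.size {n : ℕ} {ar : Fin n → ℕ} {m : ℕ} : FAtom n ar m → ℕ
  | .pred i _ => ar i + 1
  | .tat _ => 3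

/-- Fluted formulas over `(n, ar)` together with `t`; the index `m` records that the
free variables form a suffix of `x₁, …, x_m`, atoms ending at the last variable. -/
inductive FL (n : ℕ) (ar : Fin n → ℕ) : ℕ → Type
  | atom {m : ℕ} (a : FAtom n ar m) : FL n ar m
  | fls {m : ℕ} : FL n ar m
  | not {m : ℕ} (φ : FL n ar m) : FL n ar m
  | and {m : ℕ} (φ ψ : FL n ar m) : FL n ar m
  | or {m : ℕ} (φ ψ : FL n ar m) : FL n ar m
  | ex {m : ℕ} (φ : FL n ar (m + 1)) : FL n ar m
  | all {m : ℕ} (φ : FL n ar (m + 1)) : FL n ar m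

def FL.Sat {n : ℕ} {ar : Fin n → ℕ} {A : Type} (M : Str n ar A) :
    ∀ {m : ℕ}, FL n ar m → (Fin m → A) → Prop
  | _, .atom a, v => FAtom.Sat M a v
  | _, .fls, _ => False
  | _, .not φ, v => ¬ FL.Sat M φ v
  | _, .and φ ψ, v => FL.Sat M φ v ∧ FL.Sat M ψ v
  | _, .or φ ψ, v => FL.Sat M φ v ∨ FL.Sat M ψ v
  | _, .ex φ, v => ∃ a : A, FL.Sat M φ (Fin.snoc v a)
  | _, .all φ, v => ∀ a : A, FL.Sat M φ (Fin.snoc v a)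

def FL.size {n : ℕ} {ar : Fin n → ℕ} : ∀ {m : ℕ}, FL n ar m → ℕ
  | _, .atom a => a.size
  | _, .fls => 1
  | _, .not φ => FL.size φ + 1
  | _, .and φ ψ => FL.size φ + FL.size ψ + 1
  | _, .or φ ψ => FL.size φ + FL.size ψ + 1
  | _, .ex φ => FL.size φ + 1
  | _, .all φ => FL.size φ + 1

/-- The largest variable index featured in a fluted formula: a sentence `φ : FL n ar 0`
belongs to the `m`-variable fluted fragment `FL^m1T` iff `FL.depth φ ≤ m`. -/
def FL.depth {n : ℕ} {ar : Fin n → ℕ} : ∀ {m : ℕ}, FL n ar m → ℕ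
  | m, .atom _ => m
  | m, .fls => m
  | _, .not φ => FL.depth φ
  | _, .and φ ψ => max (FL.depth φ) (FL.depth ψ)
  | _, .or φ ψ => max (FL.depth φ) (FL.depth ψ)
  | _, .ex φ => FL.depth φ
  | _, .all φ => FL.depth φ

/-- Satisfaction of a fluted sentence. -/
def SatSent {n : ℕ} {ar : Fin n → ℕ} {A : Type} (M : Str n ar A) (φ : FL n ar 0) : Prop :=
  FL.Sat M φ (fun i => i.elim0)

/-- `φ` is satisfiable in a structure interpreting `t` as a transitive relation. -/
def SatisfiableT {n : ℕ} {ar : Fin n → ℕ} (φ : FL n ar 0) : Prop :=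
  ∃ (A : Type) (_ : Nonempty A) (M : Str n ar A), Transitive M.T ∧ SatSent M φ

/-- A fluted `m`-literal. -/
abbrev Lit (n : ℕ) (ar : Fin n → ℕ) (m : ℕ) := Bool × FAtom n ar m

/-- A fluted `m`-clause: a disjunction of fluted `m`-literals. -/
abbrev Clause (n : ℕ) (ar : Fin n → ℕ) (m : ℕ) := List (Lit n ar m)

def Clause.Sat {n : ℕ} {ar : Fin n → ℕ} {A : Type} (M : Str n ar A) {m : ℕ}
    (c : Clause n ar m) (v : Fin m → A) : Prop :=
  ∃ l ∈ c, (if l.1 then FAtom.Sat M l.2 v else ¬ FAtom.Sat M l.2 v)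

def Clause.size {n : ℕ} {ar : Fin n → ℕ} {m : ℕ} (c : Clause n ar m) : ℕ :=
  (c.map fun l => FAtom.size l.2 + 1).sum + 1

/-- A formula of `FL^{k+1}1T` in clause normal form:
`∀x₁⋯x_{k+1}.Ω ∧ ⋀ᵢ ∀x₁⋯x_k(αᵢ → ∃x_{k+1}.Γᵢ) ∧ ⋀ⱼ ∀x₁⋯x_k(βⱼ → ∀x_{k+1}.Δⱼ)`,
where `Ω`, the `Γᵢ` and the `Δⱼ` are sets of fluted `(k+1)`-clauses and the `αᵢ`, `βⱼ`
are fluted `k`-atoms. -/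
structure CNF (n : ℕ) (ar : Fin n → ℕ) (k : ℕ) where
  static : List (Clause n ar (k + 1))
  exCon : List (FAtom n ar k × List (Clause n ar (k + 1)))
  allCon : List (FAtom n ar k × List (Clause n ar (k + 1)))

def CNF.Sat {n : ℕ} {ar : Fin n → ℕ} {k : ℕ} {A : Type} (M : Str n ar A)
    (φ : CNF n ar k) : Prop :=
  (∀ v : Fin (k + 1) → A, ∀ c ∈ φ.static, Clause.Sat M c v) ∧
  (∀ g ∈ φ.exCon, ∀ v : Fin k → A, FAtom.Sat M g.1 v →
    ∃ a : A, ∀ c ∈ g.2, Clause.Sat M c (Fin.snoc v a)) ∧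
  (∀ g ∈ φ.allCon, ∀ v : Fin k → A, FAtom.Sat M g.1 v →
    ∀ a : A, ∀ c ∈ g.2, Clause.Sat M c (Fin.snoc v a))

def CNF.size {n : ℕ} {ar : Fin n → ℕ} {k : ℕ} (φ : CNF n ar k) : ℕ :=
  (φ.static.map Clause.size).sum +
  (φ.exCon.map fun g => FAtom.size g.1 + (g.2.map Clause.size).sum + 1).sum +
  (φ.allCon.map fun g => FAtom.size g.1 + (g.2.map Clause.size).sum + 1).sum + 1

/-- `φ` (a clause-normal-form formula) is satisfiable with `t` transitive. -/
def CNF.SatisfiableT {n : ℕ} {ar : Fin n → ℕ} {k : ℕ} (φ : CNF n ar k) : Prop :=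
  ∃ (A : Type) (_ : Nonempty A) (M : Str n ar A), Transitive M.T ∧ CNF.Sat M φ

/-- Renaming of predicates along an arity-preserving signature inclusion. -/
def FAtom.lift {n n' : ℕ} {ar : Fin n → ℕ} {ar' : Fin n' → ℕ} (ι : Fin n → Fin n')
    (hι : ∀ i, ar' (ι i) = ar i) {m : ℕ} : FAtom n ar m → FAtom n' ar' m
  | .pred i h => .pred (ι i) (by rw [hι i]; exact h)
  | .tat h => .tat h

def FL.lift {n n' : ℕ} {ar : Fin n → ℕ} {ar' : Fin n' → ℕ} (ι : Fin n → Fin n')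
    (hι : ∀ i, ar' (ι i) = ar i) : ∀ {m : ℕ}, FL n ar m → FL n' ar' m
  | _, .atom a => .atom (FAtom.lift ι hι a)
  | _, .fls => .fls
  | _, .not φ => .not (FL.lift ι hι φ)
  | _, .and φ ψ => .and (FL.lift ι hι φ) (FL.lift ι hι ψ)
  | _, .or φ ψ => .or (FL.lift ι hι φ) (FL.lift ι hι ψ)
  | _, .ex φ => .ex (FL.lift ι hι φ)
  | _, .all φ => .all (FL.lift ι hι φ)


section Aux
variable {n : ℕ} {ar : Fin n → ℕ} {A : Type}

theorem le_depth : ∀ {m : ℕ} (φ : FL n ar m), m ≤ FL.depth φ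
  | _, .atom _ => le_rfl
  | _, .fls => le_rfl
  | _, .not φ => le_depth φ
  | _, .and φ _ => le_trans (le_depth φ) (le_max_left _ _)
  | _, .or φ _ => le_trans (le_depth φ) (le_max_left _ _)
  | _, .ex φ => le_trans (Nat.le_succ _) (le_depth φ)
  | _, .all φ => le_trans (Nat.le_succ _) (le_depth φ)

theorem game {N : Type} (M : Str n ar A) (M' : Str n ar N)
    (Z : ∀ m : ℕ, (Fin m → N) → (Fin m → A) → Prop)
    (hat : ∀ m v w, Z m v w → ∀ a : FAtom n ar m, a.Sat M' v ↔ a.Sat M w)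
    (forth : ∀ m v w, m < 2 → Z m v w → ∀ y, ∃ b, Z (m+1) (Fin.snoc v y) (Fin.snoc w b))
    (back : ∀ m v w, m < 2 → Z m v w → ∀ b, ∃ y, Z (m+1) (Fin.snoc v y) (Fin.snoc w b)) :
    ∀ {m : ℕ} (φ : FL n ar m), FL.depth φ ≤ 2 → ∀ v w, Z m v w →
      (FL.Sat M' φ v ↔ FL.Sat M φ w) := by
  intro m φ
  induction φ with
  | atom a => intro _ v w h; exact hat _ v w h a
  | fls => intro _ v w h; rfl
  | not φ ih => intro hd v w h; exact not_congr (ih hd v w h)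
  | and φ ψ ih1 ih2 =>
    intro hd v w h
    simp only [FL.depth, max_le_iff] at hd
    exact and_congr (ih1 hd.1 v w h) (ih2 hd.2 v w h)
  | or φ ψ ih1 ih2 =>
    intro hd v w h
    simp only [FL.depth, max_le_iff] at hd
    exact or_congr (ih1 hd.1 v w h) (ih2 hd.2 v w h)
  | ex φ ih =>
    intro hd v w h
    have hm := le_trans (le_depth φ) hd
    constructor
    · rintro ⟨y, hy⟩
      obtain ⟨b, hb⟩ := forth _ v w (by omega) h y
      exact ⟨b, (ih hd _ _ hb).1 hy⟩
    · rintro ⟨b, hy⟩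
      obtain ⟨y, hb⟩ := back _ v w (by omega) h b
      exact ⟨y, (ih hd _ _ hb).2 hy⟩
  | all φ ih =>
    intro hd v w h
    have hm := le_trans (le_depth φ) hd
    constructor
    · intro H b
      obtain ⟨y, hb⟩ := back _ v w (by omega) h b
      exact (ih hd _ _ hb).1 (H y)
    · intro H y
      obtain ⟨b, hb⟩ := forth _ v w (by omega) h y
      exact (ih hd _ _ hb).2 (H b)

abbrev PT (n : ℕ) := Fin n → Prop
abbrev KT (n : ℕ) := PT n × Set (PT n × Prop × PT n) × Set (PT n) × Set (PT n) × Set (PT n)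

def tp (M : Str n ar A) (a : A) : PT n := fun i => M.R i (fun _ => a)
def bt (M : Str n ar A) (a b : A) : PT n := fun i => M.R i (fun j => if j.val = 0 then a else b)
def sees (M : Str n ar A) (a : A) : Set (PT n × Prop × PT n) :=
  {s | ∃ b, s = (bt M a b, M.T a b, tp M b)}
def dset (M : Str n ar A) (a : A) : Set (PT n) := {u | ∃ b, M.T a b ∧ tp M b = u}
def fset (M : Str n ar A) (a : A) : Set (PT n) := {u | ∀ b, tp M b = u → M.T a b}
def pset (M : Str n ar A) (a : A) : Set (PT n) := {u | ∃ b, M.T b a ∧ tp M b = u}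
def kl (M : Str n ar A) (a : A) : KT n := (tp M a, sees M a, dset M a, fset M a, pset M a)

def rmin (k l : KT n) : Prop := ∃ u ∈ k.2.2.2.1, u ∈ l.2.2.2.2 ∨ u = l.1
def rmax (k l : KT n) : Prop :=
  l.1 ∈ k.2.2.1 ∧ l.2.2.1 ⊆ k.2.2.1 ∧ l.2.2.2.1 ⊆ k.2.2.2.1 ∧
    k.2.2.2.2 ⊆ l.2.2.2.2 ∧ k.1 ∈ l.2.2.2.2

theorem rmax_trans {k l m : KT n} (h : rmax k l) (h' : rmax l m) : rmax k m :=
  ⟨h.2.1 h'.1, h'.2.1.trans h.2.1, h'.2.2.1.trans h.2.2.1, h.2.2.2.1.trans h'.2.2.2.1,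
    h'.2.2.2.1 h.2.2.2.2⟩

theorem rmin_max {k l m : KT n} (h : rmin k l) (h' : rmax l m) : rmin k m := by
  obtain ⟨u, hu, h1 | h1⟩ := h
  · exact ⟨u, hu, Or.inl (h'.2.2.2.1 h1)⟩
  · exact ⟨u, hu, Or.inl (h1 ▸ h'.2.2.2.2)⟩

theorem rmax_min {k l m : KT n} (h : rmax k l) (h' : rmin l m) : rmin k m := by
  obtain ⟨u, hu, h1⟩ := h'
  exact ⟨u, h.2.2.1 hu, h1⟩

theorem T_rmax (M : Str n ar A) (hT : Transitive M.T) {a b : A} (h : M.T a b) :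
    rmax (kl M a) (kl M b) := by
  refine ⟨⟨b, h, rfl⟩, ?_, ?_, ?_, ⟨a, h, rfl⟩⟩
  · rintro u ⟨c, hc, rfl⟩; exact ⟨c, hT h hc, rfl⟩
  · intro u hu c hc; exact hT h (hu c hc)
  · rintro u ⟨c, hc, rfl⟩; exact ⟨c, hT hc h, rfl⟩

theorem rmin_T (M : Str n ar A) (hT : Transitive M.T) {a b : A}
    (h : rmin (kl M a) (kl M b)) : M.T a b := by
  obtain ⟨u, hu, ⟨c, hc, rfl⟩ | rfl⟩ := h
  · exact hT (hu c rfl) hc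
  · exact hu b rfl

abbrev Dom (M : Str n ar A) := Set.range (kl M) × Bool × PT n

noncomputable def rep (M : Str n ar A) (x : Dom M) : A := x.1.2.choose
theorem rep_spec (M : Str n ar A) (x : Dom M) : kl M (rep M x) = x.1.1 := x.1.2.choose_spec

def newT (M : Str n ar A) (x y : Dom M) : Prop :=
  rmin x.1.1 y.1.1 ∨ (x.2.1 = y.2.1 ∧ rmax x.1.1 y.1.1)

theorem newT_rmax (M : Str n ar A) (hT : Transitive M.T) {x y : Dom M} (h : newT M x y) :
    rmax x.1.1 y.1.1 := by
  rcases h with h | h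
  · rw [← rep_spec, ← rep_spec] at h ⊢
    exact T_rmax M hT (rmin_T M hT h)
  · exact h.2

theorem newT_trans (M : Str n ar A) (hT : Transitive M.T) : Transitive (newT M) := by
  intro x y z h h'
  rcases h with h | h
  · exact Or.inl (rmin_max h (newT_rmax M hT h'))
  · rcases h' with h' | h'
    · exact Or.inl (rmax_min h.2 h')
    · exact Or.inr ⟨h.1.trans h'.1, rmax_trans h.2 h'.2⟩

theorem exists_bt (M : Str n ar A) (hT : Transitive M.T) (x y : Dom M) :
    ∃ β, (β, newT M x y, tp M (rep M y)) ∈ sees M (rep M x) := by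
  by_cases h : newT M x y
  · have h1 := newT_rmax M hT h
    rw [← rep_spec, ← rep_spec] at h1
    obtain ⟨b, hb, hb'⟩ := h1.1
    exact ⟨_, b, Prod.ext rfl (Prod.ext (propext ⟨fun _ => hb, fun _ => h⟩) hb'.symm)⟩
  · have h1 : ¬ rmin x.1.1 y.1.1 := fun h1 => h (Or.inl h1)
    rw [← rep_spec, ← rep_spec] at h1
    have h2 : tp M (rep M y) ∉ fset M (rep M x) := fun h2 => h1 ⟨_, h2, Or.inr rfl⟩
    simp only [fset, Set.mem_setOf_eq, not_forall] at h2
    obtain ⟨b, hb, hb'⟩ := h2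
    exact ⟨_, b, Prod.ext rfl (Prod.ext (propext ⟨fun q => (h q).elim, fun q => (hb' q).elim⟩)
      hb.symm)⟩

open Classical in
noncomputable def newB (M : Str n ar A) (x y : Dom M) : PT n :=
  if (y.2.2, newT M x y, tp M (rep M y)) ∈ sees M (rep M x) then y.2.2
  else Classical.epsilon (fun β => (β, newT M x y, tp M (rep M y)) ∈ sees M (rep M x))

theorem newB_mem (M : Str n ar A) (hT : Transitive M.T) (x y : Dom M) :
    (newB M x y, newT M x y, tp M (rep M y)) ∈ sees M (rep M x) := by
  unfold newB
  split_ifs with h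
  · exact h
  · exact Classical.epsilon_spec (exists_bt M hT x y)

theorem back_ex (M : Str n ar A) (hT : Transitive M.T) (x : Dom M) (b : A) :
    ∃ y : Dom M, newB M x y = bt M (rep M x) b ∧ (newT M x y ↔ M.T (rep M x) b) ∧
      tp M (rep M y) = tp M b := by
  classical
  let y : Dom M := (⟨kl M b, b, rfl⟩, if M.T (rep M x) b then x.2.1 else !x.2.1,
    bt M (rep M x) b)
  have hy : kl M (rep M y) = kl M b := rep_spec M y
  have htp : tp M (rep M y) = tp M b := congrArg Prod.fst hy
  have hTT : newT M x y ↔ M.T (rep M x) b := by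
    constructor
    · rintro (h | h)
      · rw [← rep_spec] at h
        exact rmin_T M hT h
      · by_contra hn
        have := h.1
        simp [y, hn] at this
    · intro h
      refine Or.inr ⟨by simp [y, h], ?_⟩
      rw [← rep_spec]
      exact T_rmax M hT h
  refine ⟨y, ?_, hTT, htp⟩
  unfold newB
  rw [if_pos]
  exact ⟨b, Prod.ext rfl (Prod.ext (propext hTT) htp)⟩

open Classical in
noncomputable def newM (M : Str n ar A) : Str n ar (Dom M) where
  R i v := if h : 2 ≤ ar i then newB M (v ⟨0, by omega⟩) (v ⟨1, by omega⟩) i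
    else M.R i (fun j => rep M (v j))
  T := newT M

def rel2 (M : Str n ar A) : ∀ m : ℕ, (Fin m → Dom M) → (Fin m → A) → Prop
  | 0, _, _ => True
  | 1, v, w => kl M (rep M (v 0)) = kl M (w 0)
  | 2, v, w => newB M (v 0) (v 1) = bt M (w 0) (w 1) ∧ (newT M (v 0) (v 1) ↔ M.T (w 0) (w 1)) ∧
      tp M (rep M (v 1)) = tp M (w 1)
  | _, _, _ => False

theorem rel2_atom (M : Str n ar A) : ∀ m v w, rel2 M m v w →
    ∀ a : FAtom n ar m, a.Sat (newM M) v ↔ a.Sat M w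
  | 0, v, w, _, .pred i h => by
    simp only [FAtom.Sat, newM]
    rw [dif_neg (by omega)]
    have : ∀ f g : Fin (ar i) → A, f = g := fun f g => funext fun j => by
      have := j.2; omega
    rw [this (fun j => rep M _)]
  | 0, v, w, _, .tat h => by omega
  | 1, v, w, hz, .pred i h => by
    simp only [FAtom.Sat, newM]
    rw [dif_neg (by omega)]
    have h1 : ∀ j : Fin 1, j = 0 := fun j => Subsingleton.elim _ _
    simp only [h1]
    exact iff_of_eq (congrFun (congrArg Prod.fst hz) i)
  | 1, v, w, _, .tat h => by omega
  | 2, v, w, hz, .pred i h => by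
    obtain ⟨hb, ht, hu⟩ := hz
    simp only [FAtom.Sat, newM]
    by_cases h2 : 2 ≤ ar i
    · rw [dif_pos h2]
      have e0 : (⟨2 - ar i + 0, by omega⟩ : Fin 2) = 0 := Fin.ext (by simp; omega)
      have e1 : (⟨2 - ar i + 1, by omega⟩ : Fin 2) = 1 := Fin.ext (by simp; omega)
      simp only [e0, e1]
      rw [hb]
      unfold bt
      apply iff_of_eq
      congr 1
      funext j
      have := j.2
      split_ifs with hj
      · congr 1; exact Fin.ext (by simp; omega)
      · congr 1; exact Fin.ext (by simp; omega)
    · rw [dif_neg h2]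
      have e1 : ∀ j : Fin (ar i), (⟨2 - ar i + j.val, by have := j.isLt; omega⟩ : Fin 2) = 1 :=
        fun j => Fin.ext (by have := j.2; simp; omega)
      simp only [e1]
      exact iff_of_eq (congrFun hu i)
  | 2, v, w, hz, .tat h => hz.2.1
  | (_ + 3), _, _, hz, _ => hz.elim

theorem rel2_forth (M : Str n ar A) (hT : Transitive M.T) : ∀ m v w, m < 2 → rel2 M m v w →
    ∀ y, ∃ b, rel2 M (m+1) (Fin.snoc v y) (Fin.snoc w b)
  | 0, v, w, _, _, y => ⟨rep M y, rfl⟩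
  | 1, v, w, _, hz, y => by
    have h1 := newB_mem M hT (v 0) y
    have h2 : sees M (rep M (v 0)) = sees M (w 0) := congrArg (fun k : KT n => k.2.1) hz
    rw [h2] at h1
    obtain ⟨b, hb⟩ := h1
    simp only [Prod.mk.injEq] at hb
    exact ⟨b, hb.1, iff_of_eq hb.2.1, hb.2.2⟩
  | (_ + 2), _, _, h, _, _ => by omega

theorem rel2_back (M : Str n ar A) (hT : Transitive M.T) : ∀ m v w, m < 2 → rel2 M m v w →
    ∀ b, ∃ y, rel2 M (m+1) (Fin.snoc v y) (Fin.snoc w b)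
  | 0, v, w, _, _, b => ⟨(⟨kl M b, b, rfl⟩, true, tp M b), rep_spec M _⟩
  | 1, v, w, _, hz, b => by
    have h2 : sees M (rep M (v 0)) = sees M (w 0) := congrArg (fun k : KT n => k.2.1) hz
    have h1 : (bt M (w 0) b, M.T (w 0) b, tp M b) ∈ sees M (rep M (v 0)) := h2 ▸ ⟨b, rfl⟩
    obtain ⟨b', hb⟩ := h1
    simp only [Prod.mk.injEq] at hb
    obtain ⟨y, hy1, hy2, hy3⟩ := back_ex M hT (v 0) b'
    exact ⟨y, hy1.trans hb.1.symm, hy2.trans (iff_of_eq hb.2.1.symm), hy3.trans hb.2.2.symm⟩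
  | (_ + 2), _, _, h, _, _ => by omega

theorem card_dom (M : Str n ar A) (s : ℕ) :
    Nat.card (Dom M) ≤ 2 ^ 2 ^ 2 ^ (3 * (n + s + 1)) := by
  have h1 : Nat.card (Dom M) ≤ Nat.card (KT n × Bool × PT n) :=
    Nat.card_le_card_of_injective (fun x => (x.1.1, x.2)) (by
      rintro ⟨⟨a, ha⟩, b⟩ ⟨⟨c, hc⟩, d⟩ h
      simpa using h)
  have h2 : Nat.card (KT n × Bool × PT n) =
      2 ^ ((n + (2 ^ n * (2 * 2 ^ n) + (2 ^ n + (2 ^ n + 2 ^ n)))) + (1 + n)) := by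
    have hP : Fintype.card Prop = 2 := by
      simp [Fintype.card_congr Equiv.propEquivBool]
    simp only [Nat.card_eq_fintype_card, Fintype.card_prod, Fintype.card_set, Fintype.card_bool,
      Fintype.card_pi, hP, Finset.prod_const, Finset.card_univ, Fintype.card_fin,
      pow_add, pow_one]
  refine h1.trans (h2.le.trans (Nat.pow_le_pow_right (by norm_num) ?_))
  have h3 : 2 * n + 3 ≤ 2 ^ (3 * (n + s + 1)) :=
    le_trans (Nat.lt_two_pow_self (n := 2 * n + 3)).le (Nat.pow_le_pow_right (by norm_num) (by omega))
  refine le_trans ?_ (Nat.pow_le_pow_right (by norm_num) h3)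
  have h4 : n + 1 ≤ 2 ^ n := Nat.lt_two_pow_self
  have h5 : 2 ^ (2 * n + 3) = 8 * (2 ^ n * 2 ^ n) := by rw [pow_add, two_mul, pow_add]; ring
  rw [h5]
  have h6 : 2 ^ n * 1 ≤ 2 ^ n * 2 ^ n := Nat.mul_le_mul_left _ Nat.one_le_two_pow
  have h7 : 2 ^ n * (2 * 2 ^ n) = 2 * (2 ^ n * 2 ^ n) := by ring
  rw [h7]
  omega

end Aux

/-- Lemma 12.  If an FL²1T-formula `φ` (two variables, one
distinguished transitive relation, arbitrary non-distinguished predicates) is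
satisfiable, then it has a model of size at most triply exponential in the size of `φ`
(the size of a formula over the signature `(n, ar)` being measured by `n + FL.size φ`).
Hence the satisfiability problem for FL²1T is in 3-NEXPTIME. -/
theorem flutedTwoVarOneTrans_triply_exponential_model_property :
    ∃ c : ℕ, ∀ (n : ℕ) (ar : Fin n → ℕ) (φ : FL n ar 0), FL.depth φ ≤ 2 →
      SatisfiableT φ →
      ∃ (A : Type) (_ : Nonempty A) (_ : Fintype A) (M : Str n ar A),
        Transitive M.T ∧ SatSent M φ ∧
        Fintype.card A ≤ 2 ^ 2 ^ 2 ^ (c * (n + FL.size φ + 1)) := by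
  refine ⟨3, ?_⟩
  rintro n ar φ hd ⟨A, ⟨a0⟩, M, hT, hs⟩
  have hfin : Finite (Dom M) := inferInstance
  refine ⟨Dom M, ⟨(⟨kl M a0, a0, rfl⟩, true, tp M a0)⟩, Fintype.ofFinite _, newM M,
    newT_trans M hT, ?_, ?_⟩
  · exact (game M (newM M) (rel2 M) (rel2_atom M) (rel2_forth M hT) (rel2_back M hT) φ hd _ _
      trivial).2 hs
  · rw [← @Nat.card_eq_fintype_card _ (Fintype.ofFinite _)]
    exact card_dom M _

end FlutedOneTrans
end

section
/- The satisfiability problem for FL²3T, the two-variable fluted fragment with three distinguished transitive relations, is undecidable: there is no algorithm that, given a sentence of FL²3T, decides whether it has a model in which all three distinguished binary relations are transitive. -/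
/- STATEMENT 12: The satisfiability problem for FL²3T, the two-variable fluted
fragment (without equality) with three distinguished transitive relations, is
undecidable. -/

namespace FlutedThreeTrans

/-- FL² formulas over countably many unary predicates (indexed by `ℕ`) and three
distinguished binary predicates (indexed by `Fin 3`); the index `m ≤ 2` records that
the free variables form a suffix of `x₁, …, x_m`, all atoms ending at the last
variable, and only the last variable may be quantified. -/
inductive F : ℕ → Type
  | patom (p : ℕ) {m : ℕ} (h1 : 1 ≤ m) (h2 : m ≤ 2) : F m
  | batom (k : Fin 3) : F 2
  | fls {m : ℕ} (h : m ≤ 2) : F m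
  | not {m : ℕ} (φ : F m) : F m
  | and {m : ℕ} (φ ψ : F m) : F m
  | or {m : ℕ} (φ ψ : F m) : F m
  | imp {m : ℕ} (φ ψ : F m) : F m
  | ex {m : ℕ} (h : m ≤ 1) (φ : F (m + 1)) : F m
  | all {m : ℕ} (h : m ≤ 1) (φ : F (m + 1)) : F m

/-- A structure interpreting the unary predicates and the three distinguished binary
predicates. -/
structure Str (A : Type) where
  U : ℕ → A → Prop
  T : Fin 3 → A → A → Prop

def Sat {A : Type} (M : Str A) : ∀ {m : ℕ}, F m → (Fin m → A) → Prop
  | m, .patom p h1 _, v => M.U p (v ⟨m - 1, by omega⟩)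
  | _, .batom k, v => M.T k (v 0) (v 1)
  | _, .fls _, _ => False
  | _, .not φ, v => ¬ Sat M φ v
  | _, .and φ ψ, v => Sat M φ v ∧ Sat M ψ v
  | _, .or φ ψ, v => Sat M φ v ∨ Sat M ψ v
  | _, .imp φ ψ, v => Sat M φ v → Sat M ψ v
  | _, .ex _ φ, v => ∃ a : A, Sat M φ (Fin.snoc v a)
  | _, .all _ φ, v => ∀ a : A, Sat M φ (Fin.snoc v a)

/-- `φ` has a model in which all three distinguished binary relations are
transitive. -/
def Satisfiable (φ : F 0) : Prop :=
  ∃ (A : Type) (_ : Nonempty A) (M : Str A),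
    (∀ k, Transitive (M.T k)) ∧ Sat M φ (fun i => i.elim0)

/-- A concrete Gödel numbering of FL²3T-formulas. -/
def encode : ∀ {m : ℕ}, F m → ℕ
  | _, .patom p _ _ => Nat.pair 0 p
  | _, .batom k => Nat.pair 1 k.val
  | _, .fls _ => Nat.pair 2 0
  | _, .not φ => Nat.pair 3 (encode φ)
  | _, .and φ ψ => Nat.pair 4 (Nat.pair (encode φ) (encode ψ))
  | _, .or φ ψ => Nat.pair 5 (Nat.pair (encode φ) (encode ψ))
  | _, .imp φ ψ => Nat.pair 6 (Nat.pair (encode φ) (encode ψ))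
  | _, .ex _ φ => Nat.pair 7 (encode φ)
  | _, .all _ φ => Nat.pair 8 (encode φ)

/-! ### Halting as a TM0 problem -/

/-- binary increment -/
def inc : List Bool → List Bool
  | [] => [true]
  | true :: l => false :: inc l
  | false :: l => true :: l

def bitsL : ℕ → List Bool
  | 0 => []
  | n + 1 => inc (bitsL n)

def bsym : Bool → Turing.PartrecToTM2.Γ'
  | true => .bit1
  | false => .bit0

theorem trPosNum_succ (p : PosNum) (l : List Bool)
    (h : Turing.PartrecToTM2.trPosNum p = l.map bsym) :
    Turing.PartrecToTM2.trPosNum p.succ = (inc l).map bsym := by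
  induction p generalizing l with
  | one =>
    rcases l with _ | ⟨b, _ | ⟨_, _⟩⟩
    · simp [Turing.PartrecToTM2.trPosNum] at h
    · cases b <;> simp_all [Turing.PartrecToTM2.trPosNum, bsym, PosNum.succ, inc]
    · simp [Turing.PartrecToTM2.trPosNum] at h
  | bit1 p ih =>
    rcases l with _ | ⟨b, l⟩
    · simp [Turing.PartrecToTM2.trPosNum] at h
    · cases b
      · simp [Turing.PartrecToTM2.trPosNum, bsym] at h
      · simp only [Turing.PartrecToTM2.trPosNum, bsym, List.map_cons, List.cons.injEq,
          true_and] at h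
        simp [Turing.PartrecToTM2.trPosNum, bsym, PosNum.succ, inc, ih l h]
  | bit0 p ih =>
    rcases l with _ | ⟨b, l⟩
    · simp [Turing.PartrecToTM2.trPosNum] at h
    · cases b <;> simp_all [Turing.PartrecToTM2.trPosNum, bsym, PosNum.succ, inc]

theorem trNat_bitsL (n : ℕ) : Turing.PartrecToTM2.trNat n = (bitsL n).map bsym := by
  unfold Turing.PartrecToTM2.trNat
  induction n with
  | zero => rfl
  | succ n ih =>
    have : ((n + 1 : ℕ) : Num) = Num.succ (n : Num) := by
      rw [Nat.cast_succ, Num.add_one]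
    rw [this]
    generalize (n : Num) = m at ih
    cases m with
    | zero =>
      have : bitsL n = [] := by
        simpa [Turing.PartrecToTM2.trNum] using ih.symm
      simp [bitsL, this, inc]; rfl
    | pos p => exact trPosNum_succ p _ ih

theorem exists_TM0 : ∃ (Γ Λ : Type) (_ : Inhabited Γ) (_ : Inhabited Λ) (_ : Finite Γ)
    (M : Turing.TM0.Machine Γ Λ) (S : Set Λ) (_ : S.Finite) (_ : Turing.TM0.Supports M S)
    (x0 : Γ) (g : Bool → Γ), ∀ n,
      (StateTransition.eval (Turing.TM0.step M)
        (Turing.TM0.init (x0 :: ((bitsL n).reverse.map g)))).Dom ↔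
      (Nat.Partrec.Code.eval (Denumerable.ofNat Nat.Partrec.Code n) 0).Dom := by
  have hp : Partrec (fun n : ℕ =>
      Nat.Partrec.Code.eval (Denumerable.ofNat Nat.Partrec.Code n) 0) :=
    Nat.Partrec.Code.eval_part.comp (Computable.ofNat _) (Computable.const 0)
  obtain ⟨c, hc⟩ := Turing.ToPartrec.Code.exists_code (Nat.Partrec'.part_iff₁.2 hp)
  let k := Turing.PartrecToTM2.Cont'.halt
  let _i : Inhabited Turing.PartrecToTM2.Λ' := ⟨Turing.PartrecToTM2.trNormal c k⟩
  have h2 := Turing.PartrecToTM2.tr_supports c k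
  have h1 := Turing.TM2to1.tr_supports Turing.PartrecToTM2.tr h2
  have h0 := Turing.TM1to0.tr_supports _ h1
  have hK : Finite Turing.PartrecToTM2.K' := by
    refine Finite.of_injective (fun k => (Turing.PartrecToTM2.K'.rec 0 1 2 3 k : Fin 4)) ?_
    intro a b h
    cases a <;> cases b <;> simp_all
  have hG : Finite (Turing.TM2to1.Γ' Turing.PartrecToTM2.K' (fun _ => Turing.PartrecToTM2.Γ')) := by
    unfold Turing.TM2to1.Γ'
    infer_instance
  refine ⟨Turing.TM2to1.Γ' Turing.PartrecToTM2.K' (fun _ => Turing.PartrecToTM2.Γ'), _,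
    inferInstance, inferInstance, hG, _, _, Finset.finite_toSet _, h0,
    (true, Function.update (fun _ => none) Turing.PartrecToTM2.K'.main
      (some Turing.PartrecToTM2.Γ'.cons)),
    fun b => (false, Function.update (fun _ => none) Turing.PartrecToTM2.K'.main
      (some (bsym b))), fun n => ?_⟩
  have e1 : ((true, Function.update (fun _ => none) Turing.PartrecToTM2.K'.main
      (some Turing.PartrecToTM2.Γ'.cons)) :: ((bitsL n).reverse.map fun b =>
      (false, Function.update (fun _ => none) Turing.PartrecToTM2.K'.main
      (some (bsym b)))) : List (Turing.TM2to1.Γ' Turing.PartrecToTM2.K'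
        (fun _ => Turing.PartrecToTM2.Γ'))) =
      Turing.TM2to1.trInit Turing.PartrecToTM2.K'.main (Turing.PartrecToTM2.trList [n]) := by
    simp only [Turing.TM2to1.trInit, Turing.PartrecToTM2.trList, trNat_bitsL,
      List.reverse_append, List.reverse_cons, List.reverse_nil, List.nil_append,
      List.singleton_append, ← List.map_reverse]
    change _ = _ :: List.map _ (List.map bsym (bitsL n).reverse)
    have gen : ∀ {α : Type} (g : Turing.PartrecToTM2.Γ' → α) (l : List Bool),
        l.map (fun b => g (bsym b)) = (l.map bsym).map g := by
      intro α g l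
      simp
    exact congrArg (List.cons _) (gen (α := Turing.TM2to1.Γ' Turing.PartrecToTM2.K'
        (fun _ => Turing.PartrecToTM2.Γ')) (fun a => (false, Function.update (fun _ => none)
          Turing.PartrecToTM2.K'.main (some a))) _)
  rw [e1]
  have a0 := Turing.TM1to0.tr_eval (Turing.TM2to1.tr Turing.PartrecToTM2.tr)
    (Turing.TM2to1.trInit Turing.PartrecToTM2.K'.main (Turing.PartrecToTM2.trList [n]))
  have a1 := Turing.TM2to1.tr_eval_dom Turing.PartrecToTM2.tr
    Turing.PartrecToTM2.K'.main (Turing.PartrecToTM2.trList [n])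
  have a2 := Turing.PartrecToTM2.tr_eval c [n]
  have a3 := hc ⟨[n], rfl⟩
  have a4 : Turing.PartrecToTM2.init c [n] =
      Turing.TM2.init Turing.PartrecToTM2.K'.main (Turing.PartrecToTM2.trList [n]) := by
    unfold Turing.PartrecToTM2.init Turing.TM2.init
    congr 1
    funext k; cases k <;> rfl
  rw [a4] at a2
  rw [← a0] at a1
  change (_ ↔ (StateTransition.eval (Turing.TM2.step Turing.PartrecToTM2.tr) _).Dom) at a1
  refine Iff.trans ?_ (a1.trans ?_)
  · rfl
  · rw [a2]
    change (Turing.ToPartrec.Code.eval c [n]).Dom ↔ _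
    change Turing.ToPartrec.Code.eval c [n] = _ at a3
    rw [a3]
    rfl


section Tiles

theorem not_dom_iff {σ : Type} (f : σ → Option σ) (a : σ) :
    ¬ (StateTransition.eval f a).Dom ↔ ∃ r : ℕ → σ, r 0 = a ∧ ∀ t, f (r t) = some (r (t + 1)) := by
  constructor
  · intro h
    let r : ℕ → σ := fun n => Nat.rec a (fun _ x => (f x).getD x) n
    have hr : ∀ t, StateTransition.Reaches f a (r t) ∧ f (r t) = some (r (t + 1)) := by
      intro t
      have key : StateTransition.Reaches f a (r t) → f (r t) = some (r (t + 1)) := by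
        intro h1
        cases h2 : f (r t) with
        | none =>
          exact absurd (Part.dom_iff_mem.2 ⟨_, StateTransition.mem_eval.2 ⟨h1, h2⟩⟩) h
        | some y =>
          have : r (t + 1) = (f (r t)).getD (r t) := rfl
          rw [this, h2]; rfl
      induction t with
      | zero => exact ⟨Relation.ReflTransGen.refl, key Relation.ReflTransGen.refl⟩
      | succ t ih =>
        have h3 : StateTransition.Reaches f a (r t) := by
          by_contra hc
          exact hc (ih (fun h1 => by
            cases h2 : f (r t) with
            | none =>
              exact absurd (Part.dom_iff_mem.2 ⟨_, StateTransition.mem_eval.2 ⟨h1, h2⟩⟩) h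
            | some y =>
              have : r (t + 1) = (f (r t)).getD (r t) := rfl
              rw [this, h2]; rfl)).1
        have h4 : f (r t) = some (r (t + 1)) := by
          cases h2 : f (r t) with
          | none =>
            exact absurd (Part.dom_iff_mem.2 ⟨_, StateTransition.mem_eval.2 ⟨h3, h2⟩⟩) h
          | some y =>
            have : r (t + 1) = (f (r t)).getD (r t) := rfl
            rw [this, h2]; rfl
        have h5 : StateTransition.Reaches f a (r (t + 1)) := Relation.ReflTransGen.tail h3 h4
        exact ⟨h5, key h5⟩
    exact ⟨r, rfl, fun t => (hr t).2⟩
  · rintro ⟨r, h0, hr⟩ hd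
    obtain ⟨b, hb⟩ := Part.dom_iff_mem.1 hd
    obtain ⟨h1, h2⟩ := StateTransition.mem_eval.1 hb
    have : ∃ t, b = r t := by
      induction h1 with
      | refl => exact ⟨0, h0.symm⟩
      | tail _ h4 ih =>
        rename_i b c h3
        by_cases hf : f b = none
        · rw [hf] at h4; cases h4
        · have : ∀ {y}, StateTransition.Reaches f a y → ∃ t, y = r t := by
            intro y hy
            induction hy with
            | refl => exact ⟨0, h0.symm⟩
            | tail _ h ih =>
              obtain ⟨t, rfl⟩ := ih
              rw [hr t] at h
              exact ⟨t + 1, (Option.some.inj h).symm⟩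
          exact this (h3.tail h4)
    obtain ⟨t, rfl⟩ := this
    rw [hr t] at h2
    cases h2

open Turing

structure Tl (Γ Λ : Type) (S : Set Λ) where
  q : S
  h : Γ
  a : Γ
  b : Γ
  c : Γ
  a' : Γ
  b' : Γ
  c' : Γ
  z : Bool

theorem Tl.finite (Γ Λ : Type) (S : Set Λ) [Finite Γ] (hS : S.Finite) : Finite (Tl Γ Λ S) := by
  have : Finite S := hS
  refine Finite.of_injective (β := S × Γ × Γ × Γ × Γ × Γ × Γ × Γ × Bool)
    (fun t => (t.q, t.h, t.a, t.b, t.c, t.a', t.b', t.c', t.z)) ?_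
  rintro ⟨⟩ ⟨⟩ h
  simp at h
  simp [h]

variable {Γ Λ : Type} [Inhabited Γ] [Inhabited Λ]

def HH {S : Set Λ} (s t : Tl Γ Λ S) : Prop :=
  s.q = t.q ∧ s.h = t.h ∧ s.b = t.a ∧ s.c = t.b ∧ s.b' = t.c' ∧ s.a' = t.b' ∧ t.z = false ∧
    (s.z = true → s.h = s.b ∧ s.b' = s.b ∧ s.a = s.a' ∧ s.c' = s.c)

def VV (M : TM0.Machine Γ Λ) {S : Set Λ} (s t : Tl Γ Λ S) : Prop :=
  s.z = t.z ∧ ∃ st, M s.q s.h = some (t.q.1, st) ∧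
    match st with
    | .move .right => t.b = s.c ∧ t.b' = s.c'
    | .move .left => t.b = s.a ∧ t.b' = s.a'
    | .write x => t.b = (if s.z then x else s.b) ∧ t.b' = (if s.z then x else s.b')

def ini {S : Set Λ} (t : Tl Γ Λ S) (g : Γ) : Prop :=
  t.q.1 = default ∧ t.b = g ∧ (t.z = false → t.b' = default)

theorem mk₁_nth_nat (l : List Γ) (i : ℕ) : (Tape.mk₁ l).nth i = l.getI i := by
  rw [Tape.mk₁, Tape.mk₂, Tape.mk'_nth_nat]
  exact ListBlank.nth_mk _ _

theorem mk₁_nth_neg (l : List Γ) (i : ℕ) : (Tape.mk₁ l).nth (-(i + 1 : ℕ)) = default := by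
  change (ListBlank.mk ([] : List Γ)).nth i = default
  rw [ListBlank.nth_mk]; simp

def act (T : Tape Γ) : TM0.Stmt Γ → Tape Γ
  | .move d => T.move d
  | .write a => T.write a

theorem step_mk (M : TM0.Machine Γ Λ) {q q' : Λ} {T : Tape Γ} {st : TM0.Stmt Γ}
    (h : M q T.head = some (q', st)) : TM0.step M ⟨q, T⟩ = some ⟨q', act T st⟩ := by
  change Option.map _ (M q T.head) = _
  rw [h]
  cases st <;> rfl

theorem of_step (M : TM0.Machine Γ Λ) {c c' : TM0.Cfg Γ Λ} (h : TM0.step M c = some c') :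
    ∃ st, M c.q c.Tape.head = some (c'.q, st) ∧ c'.Tape = act c.Tape st := by
  obtain ⟨q, T⟩ := c
  obtain ⟨⟨q', st⟩, h1, h2⟩ := Option.map_eq_some_iff.1 h
  refine ⟨st, ?_, ?_⟩
  · rw [← h2]; exact h1
  · rw [← h2]; cases st <;> rfl

theorem tiling_iff (M : TM0.Machine Γ Λ) (S : Set Λ) (hS : TM0.Supports M S) (l : List Γ) :
    (∃ τ : ℕ → ℕ → Tl Γ Λ S, (∀ i j, HH (τ i j) (τ (i + 1) j)) ∧
      (∀ i j, VV M (τ i j) (τ i (j + 1))) ∧ (∀ i, ini (τ i 0) (l.getI i)) ∧ (τ 0 0).z = true) ↔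
    ¬ (StateTransition.eval (TM0.step M) (TM0.init l)).Dom := by
  rw [not_dom_iff]
  constructor
  · rintro ⟨τ, hH, hV, hI, hO⟩
    have hz0 : ∀ j, (τ 0 j).z = true := by
      intro j
      induction j with
      | zero => exact hO
      | succ j ih => rw [← (hV 0 j).1]; exact ih
    have hzs : ∀ i j, (τ (i + 1) j).z = false := fun i j => (hH i j).2.2.2.2.2.2.1
    let R : ℕ → TM0.Cfg Γ Λ → Prop := fun j c => ∀ i : ℕ, (τ i j).q.1 = c.q ∧
      (τ i j).b = c.Tape.nth i ∧ (τ i j).b' = c.Tape.nth (-(i : ℤ))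
    have hq : ∀ i j, (τ i j).q = (τ 0 j).q ∧ (τ i j).h = (τ 0 j).h := by
      intro i j
      induction i with
      | zero => exact ⟨rfl, rfl⟩
      | succ i ih =>
        obtain ⟨h1, h2, -⟩ := hH i j
        exact ⟨h1.symm.trans ih.1, h2.symm.trans ih.2⟩
    have step : ∀ j c, R j c → ∃ c', TM0.step M c = some c' ∧ R (j + 1) c' := by
      rintro j ⟨q, T⟩ hR
      have hh : ∀ i, (τ i j).h = T.head := by
        intro i
        rw [(hq i j).2, ((hH 0 j).2.2.2.2.2.2.2 (hz0 j)).1, (hR 0).2.1]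
        rfl
      have hc : ∀ i : ℕ, (τ i j).c = T.nth (i + 1) := by
        intro i
        rw [(hH i j).2.2.2.1, (hR (i + 1)).2.1]
        simp
      have ha' : ∀ i : ℕ, (τ i j).a' = T.nth (-(i : ℤ) - 1) := by
        intro i
        rw [(hH i j).2.2.2.2.2.1, (hR (i + 1)).2.2]
        congr 1; push_cast; ring
      have ha : ∀ i : ℕ, (τ i j).a = T.nth ((i : ℤ) - 1) := by
        intro i
        cases i with
        | zero =>
          rw [((hH 0 j).2.2.2.2.2.2.2 (hz0 j)).2.2.1, ha']; simp
        | succ i => rw [← (hH i j).2.2.1, (hR i).2.1]; congr 1; push_cast; ring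
      have hc' : ∀ i : ℕ, (τ i j).c' = T.nth (-(i : ℤ) + 1) := by
        intro i
        cases i with
        | zero =>
          rw [((hH 0 j).2.2.2.2.2.2.2 (hz0 j)).2.2.2, hc]; simp
        | succ i => rw [← (hH i j).2.2.2.2.1, (hR i).2.2]; congr 1; push_cast; ring
      obtain ⟨-, st, h1, -⟩ := hV 0 j
      rw [(hR 0).1, hh] at h1
      refine ⟨⟨(τ 0 (j + 1)).q, act T st⟩, step_mk M h1, ?_⟩
      · intro i
        obtain ⟨-, st', h2, h3⟩ := hV i j
        rw [(hR i).1, hh] at h2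
        have e := h1.symm.trans h2
        simp only [Option.some.injEq, Prod.mk.injEq] at e
        obtain ⟨e1, rfl⟩ := e
        refine ⟨e1.symm, ?_⟩
        match st, h3 with
        | .move .right, h3 =>
          simp only [act, Tape.move_right_nth]
          rw [h3.1, h3.2]; exact ⟨hc i, hc' i⟩
        | .move .left, h3 =>
          simp only [act, Tape.move_left_nth]
          rw [h3.1, h3.2]; exact ⟨ha i, ha' i⟩
        | .write x, h3 =>
          simp only [act, Tape.write_nth]
          rw [h3.1, h3.2]
          cases i with
          | zero => simp [hz0]
          | succ i =>
            have e1 : ((i + 1 : ℕ) : ℤ) ≠ 0 := by omega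
            have e2 : -((i + 1 : ℕ) : ℤ) ≠ 0 := by omega
            rw [if_neg e1, if_neg e2]
            simp only [hzs]
            exact (hR (i + 1)).2
    have init : R 0 (TM0.init l) := by
      intro i
      obtain ⟨h1, h2, h3⟩ := hI i
      refine ⟨h1, h2.trans (mk₁_nth_nat l i).symm, ?_⟩
      cases i with
      | zero =>
        rw [((hH 0 0).2.2.2.2.2.2.2 (hz0 0)).2.1, h2]
        exact (mk₁_nth_nat l 0).symm
      | succ i =>
        rw [h3 (hzs _ _)]
        exact (mk₁_nth_neg l i).symm
    choose! nx hn1 hn2 using step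
    let r : ℕ → TM0.Cfg Γ Λ := fun n => Nat.rec (TM0.init l) (fun j c => nx j c) n
    have hr : ∀ j, R j (r j) := by
      intro j
      induction j with
      | zero => exact init
      | succ j ih => exact hn2 j _ ih
    exact ⟨r, rfl, fun t => hn1 t _ (hr t)⟩
  · rintro ⟨r, h0, hr⟩
    have hmem : ∀ t, (r t).q ∈ S := by
      intro t
      induction t with
      | zero => rw [h0]; exact hS.1
      | succ t ih => exact TM0.step_supports M hS (hr t) ih
    refine ⟨fun i t => ⟨⟨(r t).q, hmem t⟩, (r t).Tape.nth 0, (r t).Tape.nth ((i : ℤ) - 1),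
      (r t).Tape.nth i, (r t).Tape.nth ((i : ℤ) + 1), (r t).Tape.nth (-(i : ℤ) - 1),
      (r t).Tape.nth (-(i : ℤ)), (r t).Tape.nth (-(i : ℤ) + 1), decide (i = 0)⟩, ?_, ?_, ?_, ?_⟩
    · intro i j
      refine ⟨rfl, rfl, ?_, ?_, ?_, ?_, ?_, ?_⟩
      · dsimp only; congr 1; push_cast; ring
      · dsimp only; congr 1
      · dsimp only; congr 1; push_cast; ring
      · dsimp only; congr 1; push_cast; ring
      · simp
      · intro h
        simp only [decide_eq_true_eq] at h
        subst h
        simp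
    · intro i j
      refine ⟨rfl, ?_⟩
      obtain ⟨st, h1, h2⟩ := of_step M (hr j)
      refine ⟨st, h1, ?_⟩
      dsimp only
      rw [h2]
      rcases st with (_ | _) | x
      · simp [act, Tape.move_left_nth]
      · simp [act, Tape.move_right_nth]
      · simp [act, Tape.write_nth]
    · intro i
      dsimp only [ini]
      rw [h0]
      refine ⟨rfl, mk₁_nth_nat l i, ?_⟩
      intro h
      cases i with
      | zero => simp at h
      | succ i => exact mk₁_nth_neg l i
    · simp


end Tiles

/-! ### Definability -/

def D0 (P : ∀ {A : Type}, Str A → Prop) : Prop :=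
  ∃ φ : F 0, ∀ (A : Type) (M : Str A) (v : Fin 0 → A), Sat M φ v ↔ P M

def D1 (P : ∀ {A : Type}, Str A → A → Prop) : Prop :=
  ∃ φ : F 1, ∀ (A : Type) (M : Str A) (v : Fin 1 → A), Sat M φ v ↔ P M (v 0)

def D2 (P : ∀ {A : Type}, Str A → A → A → Prop) : Prop :=
  ∃ φ : F 2, ∀ (A : Type) (M : Str A) (v : Fin 2 → A), Sat M φ v ↔ P M (v 0) (v 1)

theorem snoc0 {A : Type} (v : Fin 0 → A) (a : A) : (Fin.snoc v a : Fin 1 → A) 0 = a := by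
  simp [Fin.snoc]

theorem snoc10 {A : Type} (v : Fin 1 → A) (a : A) : (Fin.snoc v a : Fin 2 → A) 0 = v 0 := by
  simp [Fin.snoc]

theorem snoc11 {A : Type} (v : Fin 1 → A) (a : A) : (Fin.snoc v a : Fin 2 → A) 1 = a := by
  simp [Fin.snoc]

theorem D0.all {P : ∀ {A : Type}, Str A → A → Prop} (h : D1 P) : D0 (fun M => ∀ x, P M x) := by
  obtain ⟨φ, h⟩ := h
  refine ⟨.all (by omega) φ, fun A M v => ?_⟩
  simp only [Sat, h, snoc0]

theorem D0.const (p : Prop) : D0 (fun _ => p) := by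
  by_cases hp : p
  · exact ⟨.not (.fls (by omega)), fun A M v => by simp [Sat, hp]⟩
  · exact ⟨.fls (by omega), fun A M v => by simp [Sat, hp]⟩

theorem D0.and {P Q : ∀ {A : Type}, Str A → Prop} (h : D0 P) (h' : D0 Q) :
    D0 (fun M => P M ∧ Q M) := by
  obtain ⟨φ, h⟩ := h
  obtain ⟨ψ, h'⟩ := h'
  exact ⟨.and φ ψ, fun A M v => by simp only [Sat, h, h']⟩

theorem D0.imp {P Q : ∀ {A : Type}, Str A → Prop} (h : D0 P) (h' : D0 Q) :
    D0 (fun M => P M → Q M) := by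
  obtain ⟨φ, h⟩ := h
  obtain ⟨ψ, h'⟩ := h'
  exact ⟨.imp φ ψ, fun A M v => by simp only [Sat, h, h']⟩

theorem D1.imp {P Q : ∀ {A : Type}, Str A → A → Prop} (h : D1 P) (h' : D1 Q) :
    D1 (fun M x => P M x → Q M x) := by
  obtain ⟨φ, h⟩ := h
  obtain ⟨ψ, h'⟩ := h'
  exact ⟨.imp φ ψ, fun A M v => by simp only [Sat, h, h']⟩

theorem D1.or {P Q : ∀ {A : Type}, Str A → A → Prop} (h : D1 P) (h' : D1 Q) :
    D1 (fun M x => P M x ∨ Q M x) := by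
  obtain ⟨φ, h⟩ := h
  obtain ⟨ψ, h'⟩ := h'
  exact ⟨.or φ ψ, fun A M v => by simp only [Sat, h, h']⟩

theorem D1.not {P : ∀ {A : Type}, Str A → A → Prop} (h : D1 P) :
    D1 (fun M x => ¬ P M x) := by
  obtain ⟨φ, h⟩ := h
  exact ⟨.not φ, fun A M v => by simp only [Sat, h]⟩

theorem D1.all {P : ∀ {A : Type}, Str A → A → A → Prop} (h : D2 P) :
    D1 (fun M x => ∀ y, P M x y) := by
  obtain ⟨φ, h⟩ := h
  refine ⟨.all (by omega) φ, fun A M v => ?_⟩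
  simp only [Sat, h, snoc10, snoc11]

theorem D1.ex {P : ∀ {A : Type}, Str A → A → A → Prop} (h : D2 P) :
    D1 (fun M x => ∃ y, P M x y) := by
  obtain ⟨φ, h⟩ := h
  refine ⟨.ex (by omega) φ, fun A M v => ?_⟩
  simp only [Sat, h, snoc10, snoc11]

theorem D2.imp {P Q : ∀ {A : Type}, Str A → A → A → Prop} (h : D2 P) (h' : D2 Q) :
    D2 (fun M x y => P M x y → Q M x y) := by
  obtain ⟨φ, h⟩ := h
  obtain ⟨ψ, h'⟩ := h'
  exact ⟨.imp φ ψ, fun A M v => by simp only [Sat, h, h']⟩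

theorem D2.or {P Q : ∀ {A : Type}, Str A → A → A → Prop} (h : D2 P) (h' : D2 Q) :
    D2 (fun M x y => P M x y ∨ Q M x y) := by
  obtain ⟨φ, h⟩ := h
  obtain ⟨ψ, h'⟩ := h'
  exact ⟨.or φ ψ, fun A M v => by simp only [Sat, h, h']⟩

theorem D2.and {P Q : ∀ {A : Type}, Str A → A → A → Prop} (h : D2 P) (h' : D2 Q) :
    D2 (fun M x y => P M x y ∧ Q M x y) := by
  obtain ⟨φ, h⟩ := h
  obtain ⟨ψ, h'⟩ := h'
  exact ⟨.and φ ψ, fun A M v => by simp only [Sat, h, h']⟩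

theorem D2.not {P : ∀ {A : Type}, Str A → A → A → Prop} (h : D2 P) :
    D2 (fun M x y => ¬ P M x y) := by
  obtain ⟨φ, h⟩ := h
  exact ⟨.not φ, fun A M v => by simp only [Sat, h]⟩

theorem D1.u (p : ℕ) : D1 (fun M x => M.U p x) :=
  ⟨.patom p (by omega) (by omega), fun A M v => Iff.rfl⟩

theorem D2.u (p : ℕ) : D2 (fun M _ y => M.U p y) :=
  ⟨.patom p (by omega) (by omega), fun A M v => Iff.rfl⟩

theorem D2.t (k : Fin 3) : D2 (fun M x y => M.T k x y) :=
  ⟨.batom k, fun A M v => Iff.rfl⟩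

theorem D0.finList {κ : Type} (P : κ → ∀ {A : Type}, Str A → Prop) (h : ∀ i, D0 (P i))
    (l : List κ) : D0 (fun M => ∀ i ∈ l, P i M) := by
  induction l with
  | nil => simpa using D0.const True
  | cons a l ih => simpa using D0.and (h a) ih

theorem D0.fin {κ : Type} [Finite κ] {P : κ → ∀ {A : Type}, Str A → Prop} (h : ∀ i, D0 (P i)) :
    D0 (fun M => ∀ i, P i M) := by
  have := Fintype.ofFinite κ
  simpa using D0.finList P h (Finset.univ : Finset κ).toList

theorem D1.finListEx {κ : Type} (P : κ → ∀ {A : Type}, Str A → A → Prop) (h : ∀ i, D1 (P i))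
    (l : List κ) : D1 (fun M x => ∃ i ∈ l, P i M x) := by
  induction l with
  | nil => exact ⟨.fls (by omega), fun A M v => by simp [Sat]⟩
  | cons a l ih => simpa using D1.or (h a) ih

theorem D1.finEx {κ : Type} [Finite κ] {P : κ → ∀ {A : Type}, Str A → A → Prop}
    (h : ∀ i, D1 (P i)) : D1 (fun M x => ∃ i, P i M x) := by
  have := Fintype.ofFinite κ
  simpa using D1.finListEx P h (Finset.univ : Finset κ).toList

theorem D0.per {P : ℕ → ∀ {A : Type}, Str A → Prop} (h : ∀ i, D0 (P i))
    (hp : ∀ i {A : Type} (M : Str A), P (i + 12) M = P i M) :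
    D0 (fun M => ∀ i, P i M) := by
  obtain ⟨φ, hφ⟩ := D0.fin (κ := Fin 12) (P := fun i => P i) (fun i => h i)
  refine ⟨φ, fun A M v => (hφ A M v).trans ⟨fun H i => ?_, fun H i => H i⟩⟩
  induction i using Nat.strongRecOn with
  | _ i ih =>
    by_cases hi : i < 12
    · exact H ⟨i, hi⟩
    · have := ih (i - 12) (by omega)
      rw [← hp, Nat.sub_add_cancel (by omega)] at this
      exact this

def C {A : Type} (M : Str A) (i : ℕ) (x : A) : Prop := M.U (Nat.pair 0 (i % 4)) x
def R {A : Type} (M : Str A) (j : ℕ) (x : A) : Prop := M.U (Nat.pair 1 (j % 3)) x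
def Z {A : Type} (M : Str A) (x : A) : Prop := M.U (Nat.pair 2 0) x
def Ti {A : Type} (M : Str A) (t : ℕ) (x : A) : Prop := M.U (Nat.pair 3 t) x
def Sy {A : Type} (M : Str A) (t : ℕ) (x : A) : Prop := M.U (Nat.pair 4 t) x
def Po {A : Type} (M : Str A) (t : ℕ) (x : A) : Prop := M.U (Nat.pair 5 t) x
def En {A : Type} (M : Str A) (x : A) : Prop := M.U (Nat.pair 6 0) x
def T {A : Type} (M : Str A) (j : ℕ) (x y : A) : Prop := M.T ⟨j % 3, Nat.mod_lt _ (by omega)⟩ x y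

structure Rules {K G : Type} [Inhabited G] (H V : K → K → Prop) (ini : K → G → Prop)
    (org : K → Prop) (kc : K → ℕ) (gc : G → ℕ) {A : Type} (M : Str A) : Prop where
  r1 : ∀ a x, C M (2 * a) x → Z M x → ∃ y, C M (2 * a + 1) y ∧ Z M y ∧ T M 0 x y
  r2 : ∀ a x, C M (2 * a + 1) x → Z M x → ∃ y, C M (2 * a + 2) y ∧ Z M y ∧ T M 2 x y
  r3 : ∀ a j x, C M (2 * a) x → R M j x → ∃ y, C M (2 * a) y ∧ R M (j + 1) y ∧ T M (j + 2) x y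
  r4 : ∀ a j x, C M (2 * a + 1) x → R M j x →
    ∃ y, C M (2 * a + 1) y ∧ R M (j + 1) y ∧ T M j x y
  r5 : ∀ a b j x, C M (2 * a) x → R M j x → ∀ y, C M (2 * b + 1) y → R M (j + 1) y →
    T M j x y → ¬ T M (j + 2) x y
  r5z : ∀ a x, C M (2 * a + 1) x → Z M x → ∀ y, C M (2 * a + 1) y → R M 1 y →
    T M 0 x y → ¬ T M 2 x y
  r6 : ∀ a b j x, C M (2 * a) x → R M j x → ∀ y, C M (2 * b + 1) y → R M j y →
    T M (j + 1) x y ∨ T M j x y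
  h1 : ∀ s t, ¬ H s t → ∀ a j x, C M (2 * a) x → R M j x → Ti M (kc s) x → ∀ y,
    C M (2 * a + 1) y → R M j y → T M j x y → ¬ Ti M (kc t) y
  h2 : ∀ s t, ¬ H s t → ∀ a j x, C M (2 * a + 2) x → R M j x → Ti M (kc t) x → ∀ y,
    C M (2 * a + 1) y → R M j y → T M j x y → ¬ Ti M (kc s) y
  hz : ∀ s t, ¬ H s t → ∀ a x, C M (2 * a + 1) x → Z M x → Ti M (kc s) x → ∀ y,
    C M (2 * a + 2) y → Z M y → T M 2 x y → ¬ Ti M (kc t) y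
  v1 : ∀ s t, ¬ V s t → ∀ a j x, C M (2 * a) x → R M j x → Ti M (kc s) x → ∀ y,
    C M (2 * a) y → R M (j + 1) y → T M (j + 2) x y → ¬ Ti M (kc t) y
  v2 : ∀ s t, ¬ V s t → ∀ a j x, C M (2 * a + 1) x → R M j x → Ti M (kc s) x → ∀ y,
    C M (2 * a + 1) y → R M (j + 1) y → T M j x y → ¬ Ti M (kc t) y
  ee : ∀ i x, En M x → C M i x → ∀ y, Z M y → C M (i + 1) y → (T M 0 x y ∨ T M 2 x y) → En M y
  es : ∀ x, En M x → Sy M (gc default) x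
  zr : ∀ x, Z M x → R M 0 x
  ti : ∀ x, ∃ t, Ti M (kc t) x
  ii : ∀ t g, ¬ ini t g → ∀ x, Z M x → Sy M (gc g) x → ¬ Ti M (kc t) x
  oo : ∀ t, ¬ org t → ∀ x, Po M 0 x → ¬ Ti M (kc t) x

theorem Rules.definable {K G : Type} [Inhabited G] [Finite K] [Finite G] (H V : K → K → Prop)
    (ini : K → G → Prop) (org : K → Prop) (kc : K → ℕ) (gc : G → ℕ) :
    D0 (fun M => Rules H V ini org kc gc M) := by
  have c1 : ∀ i, D1 (fun M x => C M i x) := fun i => D1.u _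
  have c2 : ∀ i, D2 (fun M _ x => C M i x) := fun i => D2.u _
  have d1 : ∀ i, D1 (fun M x => R M i x) := fun i => D1.u _
  have d2 : ∀ i, D2 (fun M _ x => R M i x) := fun i => D2.u _
  have e1 : D1 (fun M x => Z M x) := D1.u _
  have e2 : D2 (fun M _ x => Z M x) := D2.u _
  have f1 : ∀ i, D1 (fun M x => Ti M i x) := fun i => D1.u _
  have f2 : ∀ i, D2 (fun M _ x => Ti M i x) := fun i => D2.u _
  have g1 : ∀ i, D1 (fun M x => Sy M i x) := fun i => D1.u _
  have h1 : ∀ i, D1 (fun M x => Po M i x) := fun i => D1.u _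
  have i1 : D1 (fun M x => En M x) := D1.u _
  have i2 : D2 (fun M _ x => En M x) := D2.u _
  have t2 : ∀ i, D2 (fun M x y => T M i x y) := fun i => D2.t _
  have pC : ∀ {A : Type} (M : Str A) i i', i % 4 = i' % 4 → C M i = C M i' := by
    intro A M i i' h; unfold C; rw [h]
  have pC0 : ∀ {A : Type} (M : Str A) i, C M (i + 12) = C M i := fun M i => pC M _ _ (by omega)
  have pC1 : ∀ {A : Type} (M : Str A) i, C M (i + 12 + 1) = C M (i + 1) :=
    fun M i => pC M _ _ (by omega)
  have pC2 : ∀ {A : Type} (M : Str A) i, C M (2 * (i + 12)) = C M (2 * i) :=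
    fun M i => pC M _ _ (by omega)
  have pC3 : ∀ {A : Type} (M : Str A) i, C M (2 * (i + 12) + 1) = C M (2 * i + 1) :=
    fun M i => pC M _ _ (by omega)
  have pC4 : ∀ {A : Type} (M : Str A) i, C M (2 * (i + 12) + 2) = C M (2 * i + 2) :=
    fun M i => pC M _ _ (by omega)
  have pR : ∀ {A : Type} (M : Str A) i i', i % 3 = i' % 3 → R M i = R M i' := by
    intro A M i i' h; unfold R; rw [h]
  have pR0 : ∀ {A : Type} (M : Str A) i, R M (i + 12) = R M i := fun M i => pR M _ _ (by omega)
  have pR1 : ∀ {A : Type} (M : Str A) i, R M (i + 12 + 1) = R M (i + 1) :=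
    fun M i => pR M _ _ (by omega)
  have pT : ∀ {A : Type} (M : Str A) i i', i % 3 = i' % 3 → T M i = T M i' := by
    intro A M i i' h; unfold T; simp only [h]
  have pT0 : ∀ {A : Type} (M : Str A) i, T M (i + 12) = T M i := fun M i => pT M _ _ (by omega)
  have pT1 : ∀ {A : Type} (M : Str A) i, T M (i + 12 + 1) = T M (i + 1) :=
    fun M i => pT M _ _ (by omega)
  have pT2 : ∀ {A : Type} (M : Str A) i, T M (i + 12 + 2) = T M (i + 2) :=
    fun M i => pT M _ _ (by omega)
  have q1 : D0 (fun M => ∀ a x, C M (2 * a) x → Z M x →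
      ∃ y, C M (2 * a + 1) y ∧ Z M y ∧ T M 0 x y) := by
    refine D0.per (fun a => D0.all (.imp (c1 _) (.imp e1 (.ex (.and (c2 _) (.and e2 (t2 _))))))) ?_
    intro i A M; simp only [pC2, pC3]
  have q2 : D0 (fun M => ∀ a x, C M (2 * a + 1) x → Z M x →
      ∃ y, C M (2 * a + 2) y ∧ Z M y ∧ T M 2 x y) := by
    refine D0.per (fun a => D0.all (.imp (c1 _) (.imp e1 (.ex (.and (c2 _) (.and e2 (t2 _))))))) ?_
    intro i A M; simp only [pC4, pC3]
  have q3 : D0 (fun M => ∀ a j x, C M (2 * a) x → R M j x →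
      ∃ y, C M (2 * a) y ∧ R M (j + 1) y ∧ T M (j + 2) x y) := by
    refine D0.per (fun a => D0.per (fun j => D0.all (.imp (c1 _) (.imp (d1 _)
      (.ex (.and (c2 _) (.and (d2 _) (t2 _))))))) ?_) ?_
    · intro i A M; simp only [pR0, pR1, pT2]
    · intro i A M; simp only [pC2]
  have q4 : D0 (fun M => ∀ a j x, C M (2 * a + 1) x → R M j x →
      ∃ y, C M (2 * a + 1) y ∧ R M (j + 1) y ∧ T M j x y) := by
    refine D0.per (fun a => D0.per (fun j => D0.all (.imp (c1 _) (.imp (d1 _)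
      (.ex (.and (c2 _) (.and (d2 _) (t2 _))))))) ?_) ?_
    · intro i A M; simp only [pR0, pR1, pT0]
    · intro i A M; simp only [pC3]
  have q5 : D0 (fun M => ∀ a b j x, C M (2 * a) x → R M j x → ∀ y, C M (2 * b + 1) y →
      R M (j + 1) y → T M j x y → ¬ T M (j + 2) x y) := by
    refine D0.per (fun a => D0.per (fun b => D0.per (fun j => D0.all (.imp (c1 _) (.imp (d1 _)
      (.all (.imp (c2 _) (.imp (d2 _) (.imp (t2 _) (.not (t2 _))))))))) ?_) ?_) ?_
    · intro i A M; simp only [pR0, pR1, pT0, pT2]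
    · intro i A M; simp only [pC3]
    · intro i A M; simp only [pC2]
  have q5z : D0 (fun M => ∀ a x, C M (2 * a + 1) x → Z M x → ∀ y, C M (2 * a + 1) y →
      R M 1 y → T M 0 x y → ¬ T M 2 x y) := by
    refine D0.per (fun a => D0.all (.imp (c1 _) (.imp e1
      (.all (.imp (c2 _) (.imp (d2 _) (.imp (t2 _) (.not (t2 _))))))))) ?_
    intro i A M; simp only [pC3]
  have q6 : D0 (fun M => ∀ a b j x, C M (2 * a) x → R M j x → ∀ y, C M (2 * b + 1) y → R M j y →
      T M (j + 1) x y ∨ T M j x y) := by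
    refine D0.per (fun a => D0.per (fun b => D0.per (fun j => D0.all (.imp (c1 _) (.imp (d1 _)
      (.all (.imp (c2 _) (.imp (d2 _) (.or (t2 _) (t2 _)))))))) ?_) ?_) ?_
    · intro i A M; simp only [pR0, pT0, pT1]
    · intro i A M; simp only [pC3]
    · intro i A M; simp only [pC2]
  have qh1 : D0 (fun M => ∀ s t, ¬ H s t → ∀ a j x, C M (2 * a) x → R M j x → Ti M (kc s) x →
      ∀ y, C M (2 * a + 1) y → R M j y → T M j x y → ¬ Ti M (kc t) y) := by
    refine D0.fin fun s => D0.fin fun t => D0.imp (D0.const _) (D0.per (fun a => D0.per (fun j =>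
      D0.all (.imp (c1 _) (.imp (d1 _) (.imp (f1 _) (.all (.imp (c2 _) (.imp (d2 _)
      (.imp (t2 _) (.not (f2 _)))))))))) ?_) ?_)
    · intro i A M; simp only [pR0, pT0]
    · intro i A M; simp only [pC2, pC3]
  have qh2 : D0 (fun M => ∀ s t, ¬ H s t → ∀ a j x, C M (2 * a + 2) x → R M j x → Ti M (kc t) x →
      ∀ y, C M (2 * a + 1) y → R M j y → T M j x y → ¬ Ti M (kc s) y) := by
    refine D0.fin fun s => D0.fin fun t => D0.imp (D0.const _) (D0.per (fun a => D0.per (fun j =>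
      D0.all (.imp (c1 _) (.imp (d1 _) (.imp (f1 _) (.all (.imp (c2 _) (.imp (d2 _)
      (.imp (t2 _) (.not (f2 _)))))))))) ?_) ?_)
    · intro i A M; simp only [pR0, pT0]
    · intro i A M; simp only [pC4, pC3]
  have qhz : D0 (fun M => ∀ s t, ¬ H s t → ∀ a x, C M (2 * a + 1) x → Z M x → Ti M (kc s) x →
      ∀ y, C M (2 * a + 2) y → Z M y → T M 2 x y → ¬ Ti M (kc t) y) := by
    refine D0.fin fun s => D0.fin fun t => D0.imp (D0.const _) (D0.per (fun a =>
      D0.all (.imp (c1 _) (.imp e1 (.imp (f1 _) (.all (.imp (c2 _) (.imp e2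
      (.imp (t2 _) (.not (f2 _)))))))))) ?_)
    intro i A M; simp only [pC4, pC3]
  have qv1 : D0 (fun M => ∀ s t, ¬ V s t → ∀ a j x, C M (2 * a) x → R M j x → Ti M (kc s) x →
      ∀ y, C M (2 * a) y → R M (j + 1) y → T M (j + 2) x y → ¬ Ti M (kc t) y) := by
    refine D0.fin fun s => D0.fin fun t => D0.imp (D0.const _) (D0.per (fun a => D0.per (fun j =>
      D0.all (.imp (c1 _) (.imp (d1 _) (.imp (f1 _) (.all (.imp (c2 _) (.imp (d2 _)
      (.imp (t2 _) (.not (f2 _)))))))))) ?_) ?_)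
    · intro i A M; simp only [pR0, pR1, pT2]
    · intro i A M; simp only [pC2]
  have qv2 : D0 (fun M => ∀ s t, ¬ V s t → ∀ a j x, C M (2 * a + 1) x → R M j x →
      Ti M (kc s) x → ∀ y, C M (2 * a + 1) y → R M (j + 1) y → T M j x y →
      ¬ Ti M (kc t) y) := by
    refine D0.fin fun s => D0.fin fun t => D0.imp (D0.const _) (D0.per (fun a => D0.per (fun j =>
      D0.all (.imp (c1 _) (.imp (d1 _) (.imp (f1 _) (.all (.imp (c2 _) (.imp (d2 _)
      (.imp (t2 _) (.not (f2 _)))))))))) ?_) ?_)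
    · intro i A M; simp only [pR0, pR1, pT0]
    · intro i A M; simp only [pC3]
  have qee : D0 (fun M => ∀ i x, En M x → C M i x → ∀ y, Z M y → C M (i + 1) y →
      (T M 0 x y ∨ T M 2 x y) → En M y) := by
    refine D0.per (fun a => D0.all (.imp i1 (.imp (c1 _) (.all (.imp e2 (.imp (c2 _)
      (.imp (.or (t2 _) (t2 _)) i2))))))) ?_
    intro i A M; simp only [pC0, pC1]
  have qes : D0 (fun M => ∀ x, En M x → Sy M (gc default) x) := D0.all (.imp i1 (g1 _))
  have qzr : D0 (fun M => ∀ x, Z M x → R M 0 x) := D0.all (.imp e1 (d1 _))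
  have qti : D0 (fun M => ∀ x, ∃ t, Ti M (kc t) x) := D0.all (D1.finEx fun t => f1 _)
  have qii : D0 (fun M => ∀ t g, ¬ ini t g → ∀ x, Z M x → Sy M (gc g) x → ¬ Ti M (kc t) x) :=
    D0.fin fun t => D0.fin fun g => D0.imp (D0.const _)
      (D0.all (.imp e1 (.imp (g1 _) (.not (f1 _)))))
  have qoo : D0 (fun M => ∀ t, ¬ org t → ∀ x, Po M 0 x → ¬ Ti M (kc t) x) :=
    D0.fin fun t => D0.imp (D0.const _) (D0.all (.imp (h1 _) (.not (f1 _))))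
  obtain ⟨φ, hφ⟩ := D0.and q1 <| D0.and q2 <| D0.and q3 <| D0.and q4 <| D0.and q5 <|
    D0.and q5z <| D0.and q6 <| D0.and qh1 <| D0.and qh2 <| D0.and qhz <| D0.and qv1 <|
    D0.and qv2 <| D0.and qee <| D0.and qes <| D0.and qzr <| D0.and qti <| D0.and qii qoo
  refine ⟨φ, fun A M v => (hφ A M v).trans ⟨?_, ?_⟩⟩
  · rintro ⟨a1, a2, a3, a4, a5, a6, a7, a8, a9, a10, a11, a12, a13, a14, a15, a16, a17, a18⟩
    exact ⟨a1, a2, a3, a4, a5, a6, a7, a8, a9, a10, a11, a12, a13, a14, a15, a16, a17, a18⟩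
  · rintro ⟨a1, a2, a3, a4, a5, a6, a7, a8, a9, a10, a11, a12, a13, a14, a15, a16, a17, a18⟩
    exact ⟨a1, a2, a3, a4, a5, a6, a7, a8, a9, a10, a11, a12, a13, a14, a15, a16, a17, a18⟩

/-! ### The initial condition -/

def iniF : List ℕ → F 0
  | [] => .not (.fls (by omega))
  | s :: l => .and
      (.and
        (.all (by omega) (.imp (.patom (Nat.pair 5 l.length) (by omega) (by omega))
          (.patom (Nat.pair 4 s) (by omega) (by omega))))
        (.all (by omega) (.imp (.patom (Nat.pair 5 l.length) (by omega) (by omega))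
          (.all (by omega) (.imp (.and (.patom (Nat.pair 2 0) (by omega) (by omega))
              (.and (.patom (Nat.pair 0 ((l.length + 1) % 4)) (by omega) (by omega))
                (.or (.batom 0) (.batom 2))))
            (.patom (Nat.pair 5 (l.length + 1)) (by omega) (by omega)))))))
      (iniF l)

def initF (l : List ℕ) : F 0 :=
  .and (.ex (by omega) (.and (.patom (Nat.pair 2 0) (by omega) (by omega))
      (.and (.patom (Nat.pair 0 0) (by omega) (by omega))
        (.patom (Nat.pair 5 0) (by omega) (by omega)))))
    (.and (.all (by omega) (.imp (.patom (Nat.pair 5 l.length) (by omega) (by omega))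
      (.patom (Nat.pair 6 0) (by omega) (by omega)))) (iniF l))

def IniS {A : Type} (M : Str A) (p s : ℕ) : Prop :=
  (∀ x, Po M p x → Sy M s x) ∧
  ∀ x, Po M p x → ∀ y, Z M y → C M (p + 1) y → (T M 0 x y ∨ T M 2 x y) → Po M (p + 1) y

theorem sat_iniF {A : Type} (M : Str A) (v : Fin 0 → A) (l : List ℕ) :
    Sat M (iniF l) v ↔ ∀ p s, l.reverse[p]? = some s → IniS M p s := by
  induction l with
  | nil => simp [iniF, Sat]
  | cons a l ih =>
    have e : Sat M (iniF (a :: l)) v ↔ IniS M l.length a ∧ Sat M (iniF l) v := by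
      simp only [iniF, Sat, IniS, and_imp]
      exact Iff.rfl
    rw [e, ih]
    constructor
    · rintro ⟨h1, h2⟩ p s hp
      rw [List.reverse_cons, List.getElem?_append] at hp
      split_ifs at hp with h
      · exact h2 _ _ hp
      · rw [List.getElem?_singleton] at hp
        split_ifs at hp with h'
        simp only [List.length_reverse] at h h'
        have : p = l.length := by omega
        subst this
        cases hp
        exact h1
    · intro h
      constructor
      · apply h; simp
      · intro p s hp
        apply h
        rw [List.reverse_cons, List.getElem?_append_left]
        · exact hp
        · exact (List.getElem?_eq_some_iff.1 hp).1

theorem sat_initF {A : Type} (M : Str A) (v : Fin 0 → A) (l : List ℕ) :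
    Sat M (initF l) v ↔ (∃ x, Z M x ∧ C M 0 x ∧ Po M 0 x) ∧ (∀ x, Po M l.length x → En M x) ∧
      ∀ p s, l.reverse[p]? = some s → IniS M p s := by
  rw [← sat_iniF M v]
  simp only [initF, Sat]
  exact Iff.rfl

/-! ### Extracting a tiling -/

section
variable {K G : Type} [Inhabited G] {H V : K → K → Prop} {ini : K → G → Prop}
    {org : K → Prop} {kc : K → ℕ} {gc : G → ℕ}

theorem extract {A : Type} (M : Str A) (hT : ∀ j x y z, T M j x y → T M j y z → T M j x z)
    (hM : Rules H V ini org kc gc M) (tape : List G)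
    (i1 : ∃ x, Z M x ∧ C M 0 x ∧ Po M 0 x) (i2 : ∀ x, Po M tape.length x → En M x)
    (i3 : ∀ p s, tape[p]? = some s → IniS M p (gc s)) :
    ∃ τ : ℕ → ℕ → K, (∀ i j, H (τ i j) (τ (i + 1) j)) ∧ (∀ i j, V (τ i j) (τ i (j + 1))) ∧
      (∀ i, ini (τ i 0) (tape.getI i)) ∧ org (τ 0 0) := by
  have right : ∀ i x, C M i x → Z M x → ∃ y, C M (i + 1) y ∧ Z M y ∧
      (∀ a, i = 2 * a → T M 0 x y) ∧ (∀ a, i = 2 * a + 1 → T M 2 x y) := by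
    intro i x h1 h2
    obtain ⟨a, rfl | rfl⟩ := Nat.even_or_odd' i
    · obtain ⟨y, h3, h4, h5⟩ := hM.r1 a x h1 h2
      exact ⟨y, h3, h4, fun _ _ => h5, fun _ _ => by omega⟩
    · obtain ⟨y, h3, h4, h5⟩ := hM.r2 a x h1 h2
      exact ⟨y, h3, h4, fun _ _ => by omega, fun _ _ => h5⟩
  have up : ∀ i j x, C M i x → R M j x → ∃ y, C M i y ∧ R M (j + 1) y ∧
      (∀ a, i = 2 * a → T M (j + 2) x y) ∧ (∀ a, i = 2 * a + 1 → T M j x y) := by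
    intro i j x h1 h2
    obtain ⟨a, rfl | rfl⟩ := Nat.even_or_odd' i
    · obtain ⟨y, h3, h4, h5⟩ := hM.r3 a j x h1 h2
      exact ⟨y, h3, h4, fun _ _ => h5, fun _ _ => by omega⟩
    · obtain ⟨y, h3, h4, h5⟩ := hM.r4 a j x h1 h2
      exact ⟨y, h3, h4, fun _ _ => by omega, fun _ _ => h5⟩
  obtain ⟨x0, hx1, hx2, hx3⟩ := i1
  have : Inhabited A := ⟨x0⟩
  choose! rt rC rZ rE rO using right
  choose! u uC uR uE uO using up
  obtain ⟨b, b0, bs⟩ : ∃ b : ℕ → A, b 0 = x0 ∧ ∀ i, b (i + 1) = rt i (b i) :=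
    ⟨fun i => Nat.rec x0 (fun i x => rt i x) i, rfl, fun _ => rfl⟩
  have hb : ∀ i, C M i (b i) ∧ Z M (b i) := by
    intro i
    induction i with
    | zero => rw [b0]; exact ⟨hx2, hx1⟩
    | succ i ih => rw [bs]; exact ⟨rC i _ ih.1 ih.2, rZ i _ ih.1 ih.2⟩
  have hbE : ∀ a, T M 0 (b (2 * a)) (b (2 * a + 1)) := fun a => by
    rw [bs]; exact rE (2 * a) _ (hb (2 * a)).1 (hb (2 * a)).2 a rfl
  have hbO : ∀ a, T M 2 (b (2 * a + 1)) (b (2 * a + 2)) := fun a => by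
    rw [bs (2 * a + 1)]; exact rO (2 * a + 1) _ (hb (2 * a + 1)).1 (hb (2 * a + 1)).2 a rfl
  have hbT : ∀ i, T M 0 (b i) (b (i + 1)) ∨ T M 2 (b i) (b (i + 1)) := by
    intro i
    obtain ⟨a, rfl | rfl⟩ := Nat.even_or_odd' i
    · exact Or.inl (hbE a)
    · exact Or.inr (hbO a)
  have hP : ∀ i, i ≤ tape.length → Po M i (b i) := by
    intro i hi
    induction i with
    | zero => rw [b0]; exact hx3
    | succ i ih =>
      exact (i3 i _ (List.getElem?_eq_getElem (by omega))).2 _ (ih (by omega)) _ (hb _).2 (hb _).1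
        (hbT i)
  have hE : ∀ i, En M (b (tape.length + i)) := by
    intro i
    induction i with
    | zero => exact i2 _ (hP _ le_rfl)
    | succ i ih => exact hM.ee _ _ ih (hb _).1 _ (hb _).2 (hb _).1 (hbT _)
  have hS : ∀ i, Sy M (gc (tape.getI i)) (b i) := by
    intro i
    by_cases hi : i < tape.length
    · rw [List.getI_eq_getElem _ hi]
      exact (i3 i _ (List.getElem?_eq_getElem hi)).1 _ (hP i hi.le)
    · rw [List.getI_eq_default _ (by omega)]
      have := hE (i - tape.length)
      rw [Nat.add_sub_cancel' (by omega)] at this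
      exact hM.es _ this
  obtain ⟨g, g0, gs⟩ : ∃ g : ℕ → ℕ → A, (∀ i, g i 0 = b i) ∧
      ∀ i j, g i (j + 1) = u i j (g i j) :=
    ⟨fun i j => Nat.rec (b i) (fun j x => u i j x) j, fun _ => rfl, fun _ _ => rfl⟩
  have hZ : ∀ i, Z M (g i 0) := fun i => by rw [g0]; exact (hb i).2
  have hgO : ∀ a, T M 2 (g (2 * a + 1) 0) (g (2 * a + 2) 0) := fun a => by
    rw [g0, g0]; exact hbO a
  have hg : ∀ i j, C M i (g i j) ∧ R M j (g i j) := by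
    intro i j
    induction j with
    | zero => rw [g0]; exact ⟨(hb i).1, hM.zr _ (hb i).2⟩
    | succ j ih => rw [gs]; exact ⟨uC i j _ ih.1 ih.2, uR i j _ ih.1 ih.2⟩
  have gE : ∀ a j, T M (j + 2) (g (2 * a) j) (g (2 * a) (j + 1)) := fun a j => by
    rw [gs]; exact uE (2 * a) j _ (hg _ _).1 (hg _ _).2 a rfl
  have gO : ∀ a j, T M j (g (2 * a + 1) j) (g (2 * a + 1) (j + 1)) := fun a j => by
    rw [gs]; exact uO (2 * a + 1) j _ (hg _ _).1 (hg _ _).2 a rfl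
  have step : ∀ a c j, T M j (g (2 * a) j) (g (2 * c + 1) j) →
      T M (j + 1) (g (2 * a) (j + 1)) (g (2 * c + 1) (j + 1)) := by
    intro a c j h
    have h1 := hM.r5 a c j _ (hg _ _).1 (hg _ _).2 _ (hg _ _).1 (hg _ _).2
      (hT _ _ _ _ h (gO c j))
    rcases hM.r6 a c (j + 1) _ (hg _ _).1 (hg _ (j + 1)).2 _ (hg (2 * c + 1) (j + 1)).1
      (hg _ _).2 with h2 | h2
    · exact absurd (hT _ _ _ _ (gE a j) h2) h1
    · exact h2
  have hR : ∀ a j, T M j (g (2 * a) j) (g (2 * a + 1) j) := by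
    intro a j
    induction j with
    | zero => rw [g0, g0]; exact hbE a
    | succ j ih => exact step a a j ih
  have hL : ∀ a j, T M (j + 1) (g (2 * a + 2) (j + 1)) (g (2 * a + 1) (j + 1)) := by
    intro a j
    induction j with
    | zero =>
      have h1 : T M 2 (g (2 * a + 1) 0) (g (2 * a + 2) 1) :=
        hT _ _ _ _ (hgO a) (gE (a + 1) 0)
      have h2 := hM.r5z a (g (2 * a + 1) 0) (hg _ _).1 (hZ _) (g (2 * a + 1) 1) (hg _ _).1
        (hg _ _).2 (gO a 0)
      rcases hM.r6 (a + 1) a 1 (g (2 * a + 2) 1) (hg _ _).1 (hg _ _).2 (g (2 * a + 1) 1)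
        (hg _ _).1 (hg _ _).2 with h3 | h3
      · exact absurd (hT _ _ _ _ h1 h3) h2
      · exact h3
    | succ j ih => exact step (a + 1) a (j + 1) ih
  choose τ hτ using fun i j => hM.ti (g i j)
  refine ⟨τ, ?_, ?_, ?_, ?_⟩
  · intro i j
    by_contra hc
    obtain ⟨a, rfl | rfl⟩ := Nat.even_or_odd' i
    · exact hM.h1 _ _ hc a j _ (hg _ _).1 (hg _ _).2 (hτ _ _) _ (hg _ _).1 (hg _ _).2 (hR a j)
        (hτ _ _)
    · cases j with
      | zero =>
        exact hM.hz _ _ hc a _ (hg _ _).1 (hZ _) (hτ _ _) _ (hg _ _).1 (hZ _) (hgO a) (hτ _ _)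
      | succ j =>
        exact hM.h2 _ _ hc a (j + 1) _ (hg _ _).1 (hg _ _).2 (hτ _ _) _ (hg _ _).1 (hg _ _).2
          (hL a j) (hτ _ _)
  · intro i j
    by_contra hc
    obtain ⟨a, rfl | rfl⟩ := Nat.even_or_odd' i
    · exact hM.v1 _ _ hc a j _ (hg _ _).1 (hg _ _).2 (hτ _ _) _ (hg _ _).1 (hg _ _).2 (gE a j)
        (hτ _ _)
    · exact hM.v2 _ _ hc a j _ (hg _ _).1 (hg _ _).2 (hτ _ _) _ (hg _ _).1 (hg _ _).2 (gO a j)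
        (hτ _ _)
  · intro i
    by_contra hc
    exact hM.ii _ _ hc _ (hZ i) (by rw [g0]; exact hS i) (hτ i 0)
  · by_contra hc
    exact hM.oo _ hc _ (by rw [g0, b0]; exact hx3) (hτ 0 0)

end

/-! ### The intended model -/

def adj (i i' : ℕ) : Prop := i' = i + 1 ∨ i = i' + 1

def TT (k i j i' j' : ℕ) : Prop :=
  (i % 2 = 0 ∧ j % 3 = k ∧ j' = j ∧ (i' = i + 1 ∨ i = i' + 1)) ∨
  (i % 2 = 1 ∧ j % 3 = k ∧ i' = i ∧ j' = j + 1) ∨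
  (i % 2 = 0 ∧ j % 3 = k ∧ j' = j + 1 ∧ (i' = i + 1 ∨ i = i' + 1)) ∨
  (i % 2 = 0 ∧ j % 3 = (k + 1) % 3 ∧ i' = i ∧ j' = j + 1) ∨
  (i % 2 = 0 ∧ j % 3 = (k + 2) % 3 ∧ i' % 2 = 1 ∧ j' % 3 = (k + 2) % 3 ∧
    ¬ (j' = j ∧ (i' = i + 1 ∨ i = i' + 1))) ∨
  (i % 2 = 0 ∧ j % 3 = (k + 1) % 3 ∧ i' % 2 = 1 ∧ j' % 3 = (k + 2) % 3 ∧
    ¬ (j' = j + 1 ∧ (i' = i + 1 ∨ i = i' + 1))) ∨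
  (k = 2 ∧ i % 2 = 1 ∧ j = 0 ∧ i' = i + 1 ∧ j' = 0) ∨
  (k = 2 ∧ i % 2 = 1 ∧ j = 0 ∧ i' = i + 1 ∧ j' = 1) ∨
  (k = 2 ∧ i % 2 = 1 ∧ j = 0 ∧ i' % 2 = 1 ∧ j' % 3 = 1 ∧
    ¬ (j' = 1 ∧ (i' = i + 2 ∨ i = i')))

theorem TT_trans {k i j i' j' i'' j'' : ℕ} (hk : k < 3) (h1 : TT k i j i' j')
    (h2 : TT k i' j' i'' j'') : TT k i j i'' j'' := by
  unfold TT at h1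
  rcases h1 with h | h | h | h | h | h | h | h | h <;> unfold TT at h2 <;>
    rcases h2 with h' | h' | h' | h' | h' | h' | h' | h' | h' <;>
    first
    | (exfalso; omega)
    | (refine Or.inr (Or.inr (Or.inl ?_)); omega)
    | (refine Or.inr (Or.inr (Or.inr (Or.inr (Or.inr (Or.inl ?_))))); omega)
    | (refine Or.inr (Or.inr (Or.inr (Or.inr (Or.inr (Or.inr (Or.inr (Or.inl ?_))))))); omega)
    | (refine Or.inr (Or.inr (Or.inr (Or.inr (Or.inr (Or.inr (Or.inr (Or.inr ?_))))))); omega)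

def mU {K G : Type} [Inhabited G] (kc : K → ℕ) (gc : G → ℕ) (tape : List G) (τ : ℕ → ℕ → K) :
    ℕ → ℕ → ℕ × ℕ → Prop
  | 0, m, x => x.1 % 4 = m
  | 1, m, x => x.2 % 3 = m
  | 2, _, x => x.2 = 0
  | 3, m, x => kc (τ x.1 x.2) = m
  | 4, m, x => gc (tape.getI x.1) = m
  | 5, m, x => x.1 = m ∧ x.2 = 0
  | _, _, x => x.2 = 0 ∧ tape.length ≤ x.1

def mM {K G : Type} [Inhabited G] (kc : K → ℕ) (gc : G → ℕ) (tape : List G) (τ : ℕ → ℕ → K) :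
    Str (ℕ × ℕ) where
  U n x := mU kc gc tape τ n.unpair.1 n.unpair.2 x
  T k x y := TT k.val x.1 x.2 y.1 y.2

section
variable {K G : Type} [Inhabited G] {H V : K → K → Prop} {ini : K → G → Prop}
    {org : K → Prop} {kc : K → ℕ} {gc : G → ℕ}

set_option maxHeartbeats 4000000 in
theorem model_rules (hk : Function.Injective kc) (hgc : Function.Injective gc)
    (tape : List G) (τ : ℕ → ℕ → K)
    (hH : ∀ i j, H (τ i j) (τ (i + 1) j)) (hV : ∀ i j, V (τ i j) (τ i (j + 1)))
    (hI : ∀ i, ini (τ i 0) (tape.getI i)) (hO : org (τ 0 0)) :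
    Rules H V ini org kc gc (mM kc gc tape τ) := by
  have eC : ∀ c x, C (mM kc gc tape τ) c x ↔ x.1 % 4 = c % 4 := by
    intro c x; simp [C, mM, mU]
  have eR : ∀ c x, R (mM kc gc tape τ) c x ↔ x.2 % 3 = c % 3 := by
    intro c x; simp [R, mM, mU]
  have eZ : ∀ x, Z (mM kc gc tape τ) x ↔ x.2 = 0 := by
    intro x; simp [Z, mM, mU]
  have eT : ∀ j x y, T (mM kc gc tape τ) j x y ↔ TT (j % 3) x.1 x.2 y.1 y.2 := by
    intro j x y; rfl
  have eTi : ∀ t x, Ti (mM kc gc tape τ) (kc t) x ↔ τ x.1 x.2 = t := by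
    intro t x; simp [Ti, mM, mU, hk.eq_iff]
  have eS : ∀ t x, Sy (mM kc gc tape τ) (gc t) x ↔ tape.getI x.1 = t := by
    intro t x; simp [Sy, mM, mU, hgc.eq_iff]
  have eP : ∀ t x, Po (mM kc gc tape τ) t x ↔ x.1 = t ∧ x.2 = 0 := by
    intro t x; simp [Po, mM, mU]
  have eE : ∀ x, En (mM kc gc tape τ) x ↔ x.2 = 0 ∧ tape.length ≤ x.1 := by
    intro x; simp [En, mM, mU]
  have hh : ∀ s t, ¬ H s t → ∀ i j i' j', τ i j = s → τ i' j' = t → i' = i + 1 → j' = j →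
      False := by
    rintro s t hc i j _ _ rfl rfl rfl rfl; exact hc (hH _ _)
  have hv : ∀ s t, ¬ V s t → ∀ i j i' j', τ i j = s → τ i' j' = t → i' = i → j' = j + 1 →
      False := by
    rintro s t hc i j _ _ rfl rfl rfl rfl; exact hc (hV _ _)
  constructor <;> simp only [eC, eR, eZ, eT, eTi, eS, eP, eE, Prod.forall, Prod.exists]
  · intro a i j h1 h2
    exact ⟨i + 1, j, by omega, by omega, Or.inl (by omega)⟩
  · intro a i j h1 h2
    exact ⟨i + 1, j, by omega, by omega, Or.inr (Or.inr (Or.inr (Or.inr (Or.inr (Or.inr (Or.inl (by omega)))))))⟩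
  · intro a c i j h1 h2
    exact ⟨i, j + 1, by omega, by omega, Or.inr (Or.inr (Or.inr (Or.inl (by omega))))⟩
  · intro a c i j h1 h2
    exact ⟨i, j + 1, by omega, by omega, Or.inr (Or.inl (by omega))⟩
  · intro a b c i j h1 h2 i' j' h3 h4 h5 h6
    unfold TT at h5 h6
    rcases h5 with h | h | h | h | h | h | h | h | h <;> first | omega | skip
  · intro a i j h1 h2 i' j' h3 h4 h5 h6
    unfold TT at h5 h6
    rcases h5 with h | h | h | h | h | h | h | h | h <;> first | omega | skip
  · intro a b c i j h1 h2 i' j' h3 h4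
    by_cases h : j' = j ∧ (i' = i + 1 ∨ i = i' + 1)
    · right
      left; omega
    · left
      right; right; right; right; left; omega
  · intro s t hc a c i j h1 h2 h3 i' j' h4 h5 h6 h7
    refine hh s t hc i j i' j' h3 h7 ?_ ?_ <;> unfold TT at h6 <;>
    rcases h6 with h | h | h | h | h | h | h | h | h <;> omega
  · intro s t hc a c i j h1 h2 h3 i' j' h4 h5 h6 h7
    refine hh s t hc i' j' i j h7 h3 ?_ ?_ <;> unfold TT at h6 <;>
    rcases h6 with h | h | h | h | h | h | h | h | h <;> omega
  · intro s t hc a i j h1 h2 h3 i' j' h4 h5 h6 h7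
    refine hh s t hc i j i' j' h3 h7 ?_ ?_ <;> unfold TT at h6 <;>
    rcases h6 with h | h | h | h | h | h | h | h | h <;> omega
  · intro s t hc a c i j h1 h2 h3 i' j' h4 h5 h6 h7
    refine hv s t hc i j i' j' h3 h7 ?_ ?_ <;> unfold TT at h6 <;>
    rcases h6 with h | h | h | h | h | h | h | h | h <;> omega
  · intro s t hc a c i j h1 h2 h3 i' j' h4 h5 h6 h7
    refine hv s t hc i j i' j' h3 h7 ?_ ?_ <;> unfold TT at h6 <;>
    rcases h6 with h | h | h | h | h | h | h | h | h <;> omega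
  · intro c i j h1 h2 i' j' h3 h4 h5
    refine ⟨h3, ?_⟩
    unfold TT at h5
    rcases h5 with h5 | h5 <;>
    rcases h5 with h | h | h | h | h | h | h | h | h <;> omega
  · rintro i j ⟨h1, h2⟩
    exact List.getI_eq_default _ h2
  · intro i j h; omega
  · intro i j; exact ⟨_, rfl⟩
  · rintro t g hc i j rfl rfl rfl; exact hc (hI i)
  · rintro t hc i j ⟨rfl, rfl⟩ rfl; exact hc hO

set_option maxHeartbeats 1000000 in
theorem main_sat (hk : Function.Injective kc) (hgc : Function.Injective gc)
    (φ : F 0) (hφ : ∀ (A : Type) (M : Str A) (v : Fin 0 → A),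
      Sat M φ v ↔ Rules H V ini org kc gc M) (tape : List G) :
    Satisfiable (.and φ (initF (tape.map gc).reverse)) ↔
    ∃ τ : ℕ → ℕ → K, (∀ i j, H (τ i j) (τ (i + 1) j)) ∧ (∀ i j, V (τ i j) (τ i (j + 1))) ∧
      (∀ i, ini (τ i 0) (tape.getI i)) ∧ org (τ 0 0) := by
  constructor
  · rintro ⟨A, _, M, hT, h1, h2⟩
    rw [hφ] at h1
    rw [sat_initF] at h2
    obtain ⟨h2, h3, h4⟩ := h2
    refine extract M (fun j x y z hx hy => hT _ hx hy) h1 tape h2 (by simpa using h3) ?_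
    intro p s hp
    apply h4
    simp [hp]
  · rintro ⟨τ, hH, hV, hI, hO⟩
    refine ⟨ℕ × ℕ, inferInstance, mM kc gc tape τ, ?_, ?_, ?_⟩
    · intro k x y z h1 h2
      exact TT_trans k.2 h1 h2
    · rw [hφ]; exact model_rules hk hgc tape τ hH hV hI hO
    · rw [sat_initF]
      have eC : ∀ c x, C (mM kc gc tape τ) c x ↔ x.1 % 4 = c % 4 := by
        intro c x; simp [C, mM, mU]
      have eZ : ∀ x, Z (mM kc gc tape τ) x ↔ x.2 = 0 := by
        intro x; simp [Z, mM, mU]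
      have eT : ∀ j x y, T (mM kc gc tape τ) j x y ↔ TT (j % 3) x.1 x.2 y.1 y.2 := by
        intro j x y; rfl
      have eS : ∀ t x, Sy (mM kc gc tape τ) t x ↔ gc (tape.getI x.1) = t := by
        intro t x; simp [Sy, mM, mU]
      have eP : ∀ t x, Po (mM kc gc tape τ) t x ↔ x.1 = t ∧ x.2 = 0 := by
        intro t x; simp [Po, mM, mU]
      have eE : ∀ x, En (mM kc gc tape τ) x ↔ x.2 = 0 ∧ tape.length ≤ x.1 := by
        intro x; simp [En, mM, mU]
      simp only [IniS, eC, eZ, eT, eS, eP, eE, Prod.forall, Prod.exists]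
      refine ⟨⟨0, 0, rfl, rfl, rfl, rfl⟩, ?_, ?_⟩
      · intro i j h
        simp only [List.length_reverse, List.length_map] at h
        omega
      · intro p s hp
        rw [List.reverse_reverse, List.getElem?_map] at hp
        constructor
        · rintro i j ⟨rfl, rfl⟩
          obtain ⟨a, ha, rfl⟩ := Option.map_eq_some_iff.1 hp
          obtain ⟨h1, h2⟩ := List.getElem?_eq_some_iff.1 ha
          rw [List.getI_eq_getElem _ h1, h2]
        · rintro i j ⟨rfl, rfl⟩ i' j' h3 h4 h5
          refine ⟨?_, h3⟩
          unfold TT at h5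
          rcases h5 with h5 | h5 <;>
          rcases h5 with h | h | h | h | h | h | h | h | h <;> omega

end

/-! ### Computability of the reduction -/

theorem inc_primrec : Primrec inc := by
  have h : Primrec (fun l : List Bool => (List.recOn l [true] fun b t ih =>
      bif b then false :: ih else true :: t : List Bool)) := by
    refine Primrec.list_rec (f := fun l : List Bool => l) (g := fun _ => [true])
      (h := fun _ p => bif p.1 then false :: p.2.2 else true :: p.2.1)
      Primrec.id (Primrec.const _) ?_
    refine Primrec.cond (Primrec.fst.comp Primrec.snd) ?_ ?_
    · exact Primrec.list_cons.comp (Primrec.const _)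
        (Primrec.snd.comp (Primrec.snd.comp Primrec.snd))
    · exact Primrec.list_cons.comp (Primrec.const _)
        (Primrec.fst.comp (Primrec.snd.comp Primrec.snd))
  refine h.of_eq fun l => ?_
  induction l with
  | nil => rfl
  | cons b t ih => cases b <;> simp [inc, ih]

theorem bitsL_primrec : Primrec bitsL := by
  have h : Primrec (Nat.rec [] fun _ l => inc l : ℕ → List Bool) :=
    Primrec.nat_rec₁ [] (inc_primrec.comp Primrec.snd)
  refine h.of_eq fun n => ?_
  induction n with
  | zero => rfl
  | succ n ih => simp [bitsL, ih]

theorem pairP {α : Type} [Primcodable α] {f g : α → ℕ} (hf : Primrec f) (hg : Primrec g) :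
    Primrec fun a => Nat.pair (f a) (g a) := Primrec₂.natPair.comp hf hg

theorem pairC {α : Type} [Primcodable α] (c : ℕ) {g : α → ℕ} (hg : Primrec g) :
    Primrec fun a => Nat.pair c (g a) := pairP (Primrec.const c) hg

def stepE (s n e : ℕ) : ℕ :=
  Nat.pair 4 (Nat.pair (Nat.pair 4 (Nat.pair
    (Nat.pair 8 (Nat.pair 6 (Nat.pair (Nat.pair 0 (Nat.pair 5 n)) (Nat.pair 0 (Nat.pair 4 s)))))
    (Nat.pair 8 (Nat.pair 6 (Nat.pair (Nat.pair 0 (Nat.pair 5 n))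
      (Nat.pair 8 (Nat.pair 6 (Nat.pair
        (Nat.pair 4 (Nat.pair (Nat.pair 0 (Nat.pair 2 0))
          (Nat.pair 4 (Nat.pair (Nat.pair 0 (Nat.pair 0 ((n + 1) % 4)))
            (Nat.pair 5 (Nat.pair (Nat.pair 1 0) (Nat.pair 1 2)))))))
        (Nat.pair 0 (Nat.pair 5 (n + 1))))))))))) e)

theorem encode_iniF_cons (s : ℕ) (l : List ℕ) :
    encode (iniF (s :: l)) = stepE s l.length (encode (iniF l)) := rfl

theorem iniF_primrec : Primrec (fun l => encode (iniF l)) := by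
  have h : Primrec (fun l : List ℕ => (List.recOn l (encode (iniF [])) fun s t ih =>
      stepE s t.length ih : ℕ)) := by
    refine Primrec.list_rec (f := fun l : List ℕ => l) (g := fun _ => encode (iniF []))
      (h := fun _ p => stepE p.1 p.2.1.length p.2.2)
      Primrec.id (Primrec.const _) ?_
    have hs : Primrec (fun p : List ℕ × ℕ × List ℕ × ℕ => p.2.1) :=
      Primrec.fst.comp Primrec.snd
    have hn : Primrec (fun p : List ℕ × ℕ × List ℕ × ℕ => p.2.2.1.length) :=
      Primrec.list_length.comp (Primrec.fst.comp (Primrec.snd.comp Primrec.snd))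
    have he : Primrec (fun p : List ℕ × ℕ × List ℕ × ℕ => p.2.2.2) :=
      Primrec.snd.comp (Primrec.snd.comp Primrec.snd)
    have hn1 : Primrec (fun p : List ℕ × ℕ × List ℕ × ℕ => p.2.2.1.length + 1) :=
      Primrec.succ.comp hn
    have hn4 : Primrec (fun p : List ℕ × ℕ × List ℕ × ℕ => (p.2.2.1.length + 1) % 4) :=
      Primrec.nat_mod.comp hn1 (Primrec.const 4)
    have h5 := pairC 0 (pairC 5 hn)
    exact pairC 4 (pairP (pairC 4 (pairP
      (pairC 8 (pairC 6 (pairP h5 (pairC 0 (pairC 4 hs)))))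
      (pairC 8 (pairC 6 (pairP h5
        (pairC 8 (pairC 6 (pairP
          (pairC 4 (pairC _ (pairC 4 (pairP (pairC 0 (pairC 0 hn4)) (Primrec.const _)))))
          (pairC 0 (pairC 5 hn1)))))))))) he)
  refine h.of_eq fun l => ?_
  induction l with
  | nil => rfl
  | cons s t ih => rw [encode_iniF_cons, ← ih]

theorem initF_primrec (φ : F 0) : Primrec (fun l => encode (.and φ (initF l))) := by
  have h5 := pairC 0 (pairC 5 (Primrec.list_length (α := ℕ)))
  exact pairC 4 (pairC _ (pairC 4 (pairC _ (pairC 4 (pairP (pairC 8 (pairC 6 (pairP h5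
    (Primrec.const _)))) iniF_primrec)))))

/-- Theorem 7.  The satisfiability problem for FL²3T is
undecidable: no computable function decides, given (the Gödel number of) a sentence of
FL²3T, whether it has a model in which the three distinguished binary relations are
transitive. -/
theorem flutedThreeTrans_sat_undecidable :
    ¬ ∃ f : ℕ → Bool, Computable f ∧
      ∀ φ : F 0, (f (encode φ) = true ↔ Satisfiable φ) := by
  rintro ⟨f, hf, hdec⟩
  obtain ⟨Γ, Λ, iΓ, iΛ, fΓ, M, S, hSf, hS, x0, g, hM⟩ := exists_TM0
  have fK : Finite (Tl Γ Λ S) := Tl.finite Γ Λ S hSf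
  obtain ⟨kc, hk⟩ : ∃ kc : Tl Γ Λ S → ℕ, Function.Injective kc :=
    Countable.exists_injective_nat _
  obtain ⟨gc, hgc⟩ : ∃ gc : Γ → ℕ, Function.Injective gc := Countable.exists_injective_nat _
  obtain ⟨φ, hφ⟩ := Rules.definable (K := Tl Γ Λ S) (G := Γ) HH (VV M) ini
    (fun t => t.z = true) kc gc
  have key : ∀ n, f (encode (.and φ (initF ((bitsL n).map (fun b => gc (g b)) ++ [gc x0])))) = true
      ↔ ¬ (Nat.Partrec.Code.eval (Denumerable.ofNat Nat.Partrec.Code n) 0).Dom := by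
    intro n
    have e : (bitsL n).map (fun b => gc (g b)) ++ [gc x0] =
        ((x0 :: ((bitsL n).reverse.map g)).map gc).reverse := by
      simp [List.map_reverse]
    rw [hdec, ← hM n, e, main_sat hk hgc φ hφ, tiling_iff M S hS]
  have hl : Primrec (fun n => (bitsL n).map (fun b => gc (g b)) ++ [gc x0]) :=
    Primrec.list_append.comp (Primrec.list_map bitsL_primrec
      ((Primrec.dom_finite (fun b => gc (g b))).comp Primrec.snd)) (Primrec.const _)
  have hc : Computable (fun c : Nat.Partrec.Code => !(f (encode (.and φ (initF
      ((bitsL (Encodable.encode c)).map (fun b => gc (g b)) ++ [gc x0])))))) :=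
    Primrec.not.to_comp.comp (hf.comp
      (((initF_primrec φ).comp hl).to_comp.comp Computable.encode))
  apply ComputablePred.halting_problem 0
  refine ⟨fun c => Classical.propDecidable _, hc.of_eq fun c => ?_⟩
  have := key (Encodable.encode c)
  rw [Denumerable.ofNat_encode] at this
  rw [Bool.eq_iff_iff]
  refine Iff.trans ?_ (@decide_eq_true_iff _ (Classical.propDecidable _)).symm
  simp only [Bool.not_eq_true', ← Bool.not_eq_true]
  rw [this, not_not]

end FlutedThreeTrans
end
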